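/- arXiv:2605.31386 — 4 statements merged into one kernel-verified Lean document; each statement's English description precedes it below -/
import Mathlib

section
/- For every accuracy ε ∈ (0,1) and smoothness parameter M > 0, there exist a natural number n with n ≤ C · ε^{-log_ρ 2} (for a universal constant C > 0, where ρ = 1 + √2 is the silver ratio) and a stepsize schedule α_0, …, α_{n-1} ∈ ℝ, such that for every dimension d, every convex function f : ℝ^d → ℝ that is differentiable with M-Lipschitz gradient and attains a minimizer x*, and every initial point x_0, the gradient descent iterates x_{t+1} = x_t − α_t ∇f(x_t) satisfy f(x_n) − f(x*) ≤ ε · M‖x_0 − x*‖². -/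
/-!
A convex function with `1`-Lipschitz gradient `G` satisfies, at every pair of points, the
interpolation inequality `f y + ⟪G y, x - y⟫ + ‖G x - G y‖² / 2 ≤ f x`. Weight each iterate of
gradient descent by its stepsize and the last one by `1`. A schedule of total weight `S` is called
primitive if the weighted interpolation inequalities bound
`S f(xₙ) + S (S - 1) / 2 ‖G xₙ‖² + ‖D‖² / 2` from above, where `D` is the weighted sum of gradients.
Completing the square in `D` bounds `f(xₙ) - f y` by a multiple of `‖x₀ - y‖² / S`.

Two primitive schedules of weights `P` and `Q` can be joined by a step `1 + τ` into a primitive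
schedule of weight `P + Q + τ` as soon as `τ² + (P + Q) τ = P Q`. For `P = Q = ρ ^ k` the solution
is `τ = ρ ^ (k - 1)`, and the new weight is `ρ ^ (k + 1)`: doubling the number of steps multiplies
the weight by `ρ`, whence the exponent `log_ρ 2`. Starting from the empty schedule this produces the
silver stepsizes.
-/

namespace SilverStepsize

open Finset
open scoped RealInnerProductSpace

section FirstOrder

variable {F : Type*} [NormedAddCommGroup F] [NormedSpace ℝ F] {φ : F → ℝ}

theorem hasDerivAt_comp_lineMap {φ' : F →L[ℝ] ℝ} {a b : F} {t : ℝ}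
    (h : HasFDerivAt φ φ' (AffineMap.lineMap a b t)) :
    HasDerivAt (fun u : ℝ ↦ φ (AffineMap.lineMap a b u)) (φ' (b - a)) t :=
  h.comp_hasDerivAt t AffineMap.hasDerivAt_lineMap

theorem add_fderiv_sub_le_of_convexOn {s : Set F} (hφ : ConvexOn ℝ s φ) {φ' : F →L[ℝ] ℝ} {a b : F}
    (ha : a ∈ s) (hb : b ∈ s) (h : HasFDerivAt φ φ' a) : φ a + φ' (b - a) ≤ φ b := by
  have hline := hφ.comp_affineMap (AffineMap.lineMap a b : ℝ →ᵃ[ℝ] F)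
  have hderiv := hasDerivAt_comp_lineMap (b := b) (t := 0) (by simpa using h)
  have hslope := hline.le_slope_of_hasDerivAt (x := 0) (y := 1) (by simpa) (by simpa) one_pos hderiv
  simp only [slope_def_field, Function.comp_apply, AffineMap.lineMap_apply_one,
    AffineMap.lineMap_apply_zero, sub_zero, div_one] at hslope
  linarith

theorem le_add_fderiv_sub_add_norm_sq {φ' : F → F →L[ℝ] ℝ} (h : ∀ x, HasFDerivAt φ (φ' x) x)
    {a : F} {L : ℝ} (hL : ∀ x, ‖φ' x - φ' a‖ ≤ L * ‖x - a‖) (b : F) :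
    φ b ≤ φ a + φ' a (b - a) + L / 2 * ‖b - a‖ ^ 2 := by
  have hline (t : ℝ) := hasDerivAt_comp_lineMap (a := a) (b := b) (t := t) (h _)
  have hparabola (t : ℝ) : HasDerivAt
      (fun u : ℝ ↦ φ a + u * φ' a (b - a) + u ^ 2 * (L / 2 * ‖b - a‖ ^ 2))
      (φ' a (b - a) + 2 * t * (L / 2 * ‖b - a‖ ^ 2)) t := by
    simpa [Pi.add_def] using (((hasDerivAt_id t).mul_const (φ' a (b - a))).const_add (φ a)).add
      ((hasDerivAt_pow 2 t).mul_const (L / 2 * ‖b - a‖ ^ 2))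
  have hbound (t : ℝ) (ht : t ∈ Set.Ico (0 : ℝ) 1) : φ' (AffineMap.lineMap a b t) (b - a) ≤
      φ' a (b - a) + 2 * t * (L / 2 * ‖b - a‖ ^ 2) := by
    rw [← sub_le_iff_le_add']
    calc φ' (AffineMap.lineMap a b t) (b - a) - φ' a (b - a)
        ≤ ‖φ' (AffineMap.lineMap a b t) - φ' a‖ * ‖b - a‖ :=
          (le_abs_self _).trans ((φ' (AffineMap.lineMap a b t) - φ' a).le_opNorm (b - a))
      _ ≤ L * ‖AffineMap.lineMap a b t - a‖ * ‖b - a‖ := by gcongr; exact hL _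
      _ = 2 * t * (L / 2 * ‖b - a‖ ^ 2) := by
          rw [AffineMap.lineMap_apply_module', add_sub_cancel_right, norm_smul,
            Real.norm_of_nonneg ht.1]
          ring
  have hle := image_le_of_deriv_right_le_deriv_boundary
    (fun t _ ↦ (hline t).continuousAt.continuousWithinAt) (fun t _ ↦ (hline t).hasDerivWithinAt)
    (by simp) (fun t _ ↦ (hparabola t).continuousAt.continuousWithinAt)
    (fun t _ ↦ (hparabola t).hasDerivWithinAt) hbound (Set.right_mem_Icc.2 zero_le_one)
  simpa using hle

end FirstOrder

variable {E : Type*} [NormedAddCommGroup E] [InnerProductSpace ℝ E]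

/-- The interpolation inequality satisfied by a convex function `f` with `1`-Lipschitz gradient
`G`. It is all that the analysis of gradient descent uses, so `G` need not be a gradient. -/
def Interpolates (f : E → ℝ) (G : E → E) : Prop :=
  ∀ x y, f y + ⟪G y, x - y⟫ + ‖G x - G y‖ ^ 2 / 2 ≤ f x

section Smooth

variable [CompleteSpace E] {f : E → ℝ} {g : E → E} {L : ℝ}

theorem add_inner_add_norm_sq_le_of_convexOn (hL : 0 < L) (hf : ConvexOn ℝ Set.univ f)
    (hg : ∀ x, HasGradientAt f (g x) x) (hlip : ∀ x y, ‖g x - g y‖ ≤ L * ‖x - y‖) (x y : E) :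
    f y + ⟪g y, x - y⟫ + ‖g x - g y‖ ^ 2 / (2 * L) ≤ f x := by
  -- This `z` minimizes the gap between the bounds `hupper` and `hlower`.
  set z := x - L⁻¹ • (g x - g y) with hz
  have hlower : f y + ⟪g y, z - y⟫ ≤ f z :=
    add_fderiv_sub_le_of_convexOn hf (Set.mem_univ y) (Set.mem_univ z) (hg y).hasFDerivAt
  have hupper : f z ≤ f x + ⟪g x, z - x⟫ + L / 2 * ‖z - x‖ ^ 2 :=
    le_add_fderiv_sub_add_norm_sq (fun w ↦ (hg w).hasFDerivAt)
      (fun w ↦ by simpa only [← map_sub, LinearIsometryEquiv.norm_map] using hlip w x) z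
  have hzx : z - x = -(L⁻¹ • (g x - g y)) := by rw [hz]; abel
  have hzy : z - y = (x - y) - L⁻¹ • (g x - g y) := by rw [hz]; abel
  have hgx : ⟪g x, g x - g y⟫ = ⟪g y, g x - g y⟫ + ‖g x - g y‖ ^ 2 := by
    rw [← real_inner_self_eq_norm_sq, ← inner_add_left, add_sub_cancel]
  rw [hzy, inner_sub_right, inner_smul_right] at hlower
  rw [hzx, inner_neg_right, inner_smul_right, hgx, norm_neg, norm_smul, norm_inv,
    Real.norm_of_nonneg hL.le] at hupper
  calc f y + ⟪g y, x - y⟫ + ‖g x - g y‖ ^ 2 / (2 * L)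
      = f y + ⟪g y, x - y⟫ + L⁻¹ * ‖g x - g y‖ ^ 2 - L / 2 * (L⁻¹ * ‖g x - g y‖) ^ 2 := by
        field_simp; ring
    _ ≤ f x := by linarith

theorem interpolates_of_convexOn (hL : 0 < L) (hf : ConvexOn ℝ Set.univ f)
    (hg : ∀ x, HasGradientAt f (g x) x) (hlip : ∀ x y, ‖g x - g y‖ ≤ L * ‖x - y‖) :
    Interpolates (fun x ↦ f x / L) (fun x ↦ L⁻¹ • g x) := by
  intro x y
  have h := div_le_div_of_nonneg_right
    (add_inner_add_norm_sq_le_of_convexOn hL hf hg hlip x y) hL.le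
  rw [← smul_sub, norm_smul, norm_inv, Real.norm_of_nonneg hL.le, real_inner_smul_left]
  refine le_of_eq_of_le ?_ h
  field_simp

end Smooth

/-- `x` runs gradient descent with gradient `G` and stepsizes `h` for `n` steps. -/
def IsDescent (G : E → E) (h : ℕ → ℝ) (n : ℕ) (x : ℕ → E) : Prop :=
  ∀ t < n, x (t + 1) = x t - h t • G (x t)

/-- The displacement of `n` steps of gradient descent followed by a closing step of length one. -/
def displacement (G : E → E) (n : ℕ) (x : ℕ → E) : E :=
  x 0 - (x n - G (x n))

/-- The total length of the first `n` steps and a closing step of length one. -/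
def weight (h : ℕ → ℝ) (n : ℕ) : ℝ :=
  ∑ i ∈ range n, h i + 1

/-- The lower bound for `f p` that the interpolation inequality at `z` gives when `p` is a
stationary point. -/
noncomputable def cut (f : E → ℝ) (G : E → E) (z p : E) : ℝ :=
  f z + ⟪G z, p - z⟫ + ‖G z‖ ^ 2 / 2

/-- The sum of the cuts of the iterates `x 0, …, x n`, weighted by the steps that leave them; the
step that leaves `x n` is the closing one of length one. -/
noncomputable def cutSum (f : E → ℝ) (G : E → E) (h : ℕ → ℝ) (n : ℕ) (x : ℕ → E) (p : E) : ℝ :=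
  ∑ i ∈ range n, h i * cut f G (x i) p + cut f G (x n) p

/-- The first `n` steps of `h` are primitive for `(f, G)` if the weighted cuts along each of their
trajectories certify the last iterate: both its value and its gradient are controlled, which is
what makes the property stable under concatenation. -/
def IsPrimitive (f : E → ℝ) (G : E → E) (h : ℕ → ℝ) (n : ℕ) : Prop :=
  ∀ x : ℕ → E, IsDescent G h n x →
    weight h n * f (x n) + weight h n * (weight h n - 1) / 2 * ‖G (x n)‖ ^ 2
      + ‖displacement G n x‖ ^ 2 / 2 ≤ cutSum f G h n x (x 0)

section Certificates

variable {f : E → ℝ} {G : E → E} {h k : ℕ → ℝ} {n : ℕ} {x : ℕ → E}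

theorem one_le_weight (hh : ∀ t < n, 0 ≤ h t) : 1 ≤ weight h n :=
  le_add_of_nonneg_left (sum_nonneg fun i hi ↦ hh i (mem_range.1 hi))

theorem weight_congr (hkh : ∀ t < n, k t = h t) : weight k n = weight h n := by
  rw [weight, weight, sum_congr rfl fun i hi ↦ hkh i (mem_range.1 hi)]

theorem weight_concat (h : ℕ → ℝ) (n m : ℕ) :
    weight h (n + 1 + m) = weight h n + (h n - 1) + weight (fun i ↦ h (n + 1 + i)) m := by
  rw [weight, weight, weight, sum_range_add, sum_range_succ]
  ring

theorem displacement_concat (m : ℕ) {τ : ℝ} (hstep : x (n + 1) = x n - (1 + τ) • G (x n)) :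
    displacement G (n + 1 + m) x
      = displacement G n x + τ • G (x n) + displacement G m (fun i ↦ x (n + 1 + i)) := by
  simp only [displacement, add_zero, hstep]
  module

theorem cutSum_congr (hkh : ∀ t < n, k t = h t) (p : E) :
    cutSum f G k n x p = cutSum f G h n x p := by
  rw [cutSum, cutSum, sum_congr rfl fun i hi ↦ by rw [hkh i (mem_range.1 hi)]]

theorem cutSum_concat (f : E → ℝ) (G : E → E) (h : ℕ → ℝ) (n m : ℕ) (x : ℕ → E) (p : E) :
    cutSum f G h (n + 1 + m) x p = cutSum f G h n x p + (h n - 1) * cut f G (x n) p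
      + cutSum f G (fun i ↦ h (n + 1 + i)) m (fun i ↦ x (n + 1 + i)) p := by
  rw [cutSum, cutSum, cutSum, sum_range_add, sum_range_succ]
  ring

theorem IsPrimitive.congr (hp : IsPrimitive f G h n) (hkh : ∀ t < n, k t = h t) :
    IsPrimitive f G k n := by
  intro x hx
  rw [weight_congr hkh, cutSum_congr hkh]
  exact hp x fun t ht ↦ by rw [hx t ht, hkh t ht]

theorem IsDescent.sum_smul_add_eq_displacement (hx : IsDescent G h n x) :
    ∑ i ∈ range n, h i • G (x i) + G (x n) = displacement G n x := by
  have hsum : ∑ i ∈ range n, h i • G (x i) = x 0 - x n := by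
    rw [← sum_range_sub']
    exact sum_congr rfl fun i hi ↦ by rw [hx i (mem_range.1 hi), sub_sub_cancel]
  rw [hsum, displacement, sub_sub_eq_add_sub, add_sub_right_comm]

theorem IsDescent.sum_inner_add_eq (hx : IsDescent G h n x) (v : E) :
    ∑ i ∈ range n, h i * ⟪G (x i), v⟫ + ⟪G (x n), v⟫ = ⟪displacement G n x, v⟫ := by
  simp only [← hx.sum_smul_add_eq_displacement, inner_add_left, sum_inner, real_inner_smul_left]

theorem cut_eq_add_inner (z p q : E) : cut f G z p = cut f G z q + ⟪G z, p - q⟫ := by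
  rw [cut, cut, ← sub_add_sub_cancel' q z p, inner_add_right]
  ring

theorem IsDescent.cutSum_eq_add_inner (hx : IsDescent G h n x) (p q : E) :
    cutSum f G h n x p = cutSum f G h n x q + ⟪displacement G n x, p - q⟫ := by
  simp only [cutSum, ← hx.sum_inner_add_eq, cut_eq_add_inner _ p q, mul_add, sum_add_distrib]
  ring

theorem Interpolates.cut_le (hf : Interpolates f G) (z p : E) :
    cut f G z p ≤ f p + ⟪G z, G p⟫ - ‖G p‖ ^ 2 / 2 := by
  have h := hf p z
  rw [norm_sub_sq_real, real_inner_comm (G z) (G p)] at h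
  rw [cut]
  linarith

theorem Interpolates.cutSum_le (hf : Interpolates f G) (hh : ∀ t < n, 0 ≤ h t)
    (hx : IsDescent G h n x) (p : E) :
    cutSum f G h n x p
      ≤ weight h n * (f p - ‖G p‖ ^ 2 / 2) + ⟪displacement G n x, G p⟫ := by
  calc cutSum f G h n x p
      ≤ ∑ i ∈ range n, h i * (f p + ⟪G (x i), G p⟫ - ‖G p‖ ^ 2 / 2)
        + (f p + ⟪G (x n), G p⟫ - ‖G p‖ ^ 2 / 2) :=
        add_le_add (sum_le_sum fun i hi ↦
          mul_le_mul_of_nonneg_left (hf.cut_le _ _) (hh i (mem_range.1 hi))) (hf.cut_le _ _)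
    _ = weight h n * (f p - ‖G p‖ ^ 2 / 2) + ⟪displacement G n x, G p⟫ := by
        simp only [← hx.sum_inner_add_eq, weight, add_sub_right_comm _ _ (‖G p‖ ^ 2 / 2), mul_add,
          sum_add_distrib, ← sum_mul]
        ring

theorem IsPrimitive.weight_mul_le (hp : IsPrimitive f G h n) (hf : Interpolates f G)
    (hh : ∀ t < n, 0 ≤ h t) (hx : IsDescent G h n x) (y : E) :
    weight h n * (f (x n) - f y + ‖G y‖ ^ 2 / 2) ≤ ‖x 0 - (y - G y)‖ ^ 2 / 2 := by
  have hcert := hp x hx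
  have hcut := hf.cutSum_le hh hx y
  rw [hx.cutSum_eq_add_inner y (x 0)] at hcut
  have hW := one_le_weight hh
  have hlast : 0 ≤ weight h n * (weight h n - 1) / 2 * ‖G (x n)‖ ^ 2 := by
    have := sub_nonneg.2 hW
    positivity
  set D := displacement G n x
  have hinner : ⟪D, x 0 - (y - G y)⟫ = ⟪D, G y⟫ - ⟪D, y - x 0⟫ := by
    rw [← inner_sub_right]; congr 1; abel
  have hsquare : 0 ≤ ‖D - (x 0 - (y - G y))‖ ^ 2 := sq_nonneg _
  rw [norm_sub_sq_real, hinner] at hsquare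
  linarith

theorem IsPrimitive.sub_le (hp : IsPrimitive f G h n) (hf : Interpolates f G)
    (hh : ∀ t < n, 0 ≤ h t) (hW : 2 ≤ weight h n) (hx : IsDescent G h n x) (y : E) :
    f (x n) - f y ≤ ‖x 0 - y‖ ^ 2 / weight h n := by
  have hrate := hp.weight_mul_le hf hh hx y
  have hsquare : ‖x 0 - (y - G y)‖ ^ 2 ≤ 2 * (‖x 0 - y‖ ^ 2 + ‖G y‖ ^ 2) := by
    rw [← sub_add]
    exact (pow_le_pow_left₀ (norm_nonneg _) (norm_add_le _ _) 2).trans (add_sq_le ..)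
  rw [le_div_iff₀ (by linarith)]
  linarith [mul_le_mul_of_nonneg_right hW (sq_nonneg ‖G y‖)]

/-- The step `1 + τ` may overshoot and increase `f`; the schedule run after it makes up for that. -/
theorem IsPrimitive.le_of_long_step (hp : IsPrimitive f G h n) (hf : Interpolates f G)
    (hh : ∀ t < n, 0 ≤ h t) (hx : IsDescent G h n x) {P τ : ℝ} {y : E} (hP : 0 < P) (hτ : 0 < τ)
    (hbal : τ ^ 2 + (P + weight h n) * τ = P * weight h n) (hy : x 0 = y - (1 + τ) • G y) :
    f (x n) + (τ + 1 - P) / 2 * ‖G y‖ ^ 2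
      + (P + τ + 2 * weight h n - 1) / 2 * ‖G (x n)‖ ^ 2 ≤ f y := by
  have hcert := hp x hx
  have hcut_y := hf.cutSum_le hh hx y
  have hcut_last := hf.cutSum_le hh hx (x n)
  have hinterp := hf (x n) y
  have hW : 0 < weight h n := zero_lt_one.trans_le (one_le_weight hh)
  rw [hx.cutSum_eq_add_inner y (x 0)] at hcut_y
  rw [hx.cutSum_eq_add_inner (x n) (x 0)] at hcut_last
  set D := displacement G n x with hD
  have hy0 : y - x 0 = (1 + τ) • G y := by rw [hy]; abel
  have hlast0 : x n - x 0 = G (x n) - D := by rw [hD, displacement]; abel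
  have hlasty : x n - y = G (x n) - D - (1 + τ) • G y := by rw [← hlast0, ← hy0]; abel
  rw [hy0] at hcut_y
  rw [hlast0] at hcut_last
  rw [hlasty] at hinterp
  simp only [inner_sub_right, inner_smul_right, norm_sub_sq_real,
    real_inner_self_eq_norm_sq] at hcut_y hcut_last hinterp
  rw [real_inner_comm (G (x n)) (G y), real_inner_comm D (G y)] at hinterp
  have hτW : 0 < weight h n - τ := by
    refine (mul_pos_iff_of_pos_left hP).1 ?_
    calc 0 < τ * (τ + weight h n) := by positivity
      _ = P * (weight h n - τ) := by linear_combination hbal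
  refine le_of_mul_le_mul_left ?_ hτW
  linear_combination hcut_y + hcut_last + 2 * hcert + τ * hinterp
    + (‖G y‖ ^ 2 - ‖G (x n)‖ ^ 2) / 2 * hbal

theorem IsPrimitive.concat {m : ℕ} {τ : ℝ} (hp : IsPrimitive f G h n)
    (hq : IsPrimitive f G (fun i ↦ h (n + 1 + i)) m) (hf : Interpolates f G)
    (hh : ∀ t < n + 1 + m, 0 ≤ h t) (hn : h n = 1 + τ) (hτ : 0 < τ)
    (hbal : τ ^ 2 + (weight h n + weight (fun i ↦ h (n + 1 + i)) m) * τ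
      = weight h n * weight (fun i ↦ h (n + 1 + i)) m) :
    IsPrimitive f G h (n + 1 + m) := by
  intro x hx
  have hP : 0 < weight h n := zero_lt_one.trans_le (one_le_weight fun t ht ↦ hh t (by omega))
  have hhead : IsDescent G h n x := fun t ht ↦ hx t (by omega)
  have htail : IsDescent G (fun i ↦ h (n + 1 + i)) m (fun i ↦ x (n + 1 + i)) :=
    fun t ht ↦ hx (n + 1 + t) (by omega)
  have hstep : x (n + 1) = x n - (1 + τ) • G (x n) := by rw [hx n (by omega), hn]
  have hcert_head := hp x hhead
  have hcert_tail := hq _ htail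
  have hdecrease := hq.le_of_long_step hf (fun t ht ↦ hh _ (by omega)) htail hP hτ hbal
    (y := x n) hstep
  rw [cutSum_concat, weight_concat, displacement_concat m hstep,
    htail.cutSum_eq_add_inner _ (x (n + 1)), hn, add_sub_cancel_left, cut]
  simp only [add_zero] at hcert_tail hdecrease
  set D₁ := displacement G n x with hD₁
  set D₂ := displacement G m (fun i ↦ x (n + 1 + i))
  have hshift : x 0 - x (n + 1) = D₁ + τ • G (x n) := by
    rw [hD₁, displacement, hstep]
    module
  have hstart : x 0 - x n = D₁ - G (x n) := by rw [hD₁, displacement]; abel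
  rw [hshift, hstart]
  simp only [norm_add_sq_real, inner_add_left, inner_add_right, inner_sub_right,
    inner_smul_left, inner_smul_right, norm_smul, mul_pow, Real.norm_eq_abs, sq_abs, conj_trivial,
    real_inner_self_eq_norm_sq]
  rw [real_inner_comm (G (x n)) D₁, real_inner_comm D₂ D₁, real_inner_comm D₂ (G (x n))]
  linear_combination hcert_head + hcert_tail + (weight h n + τ) * hdecrease

theorem isPrimitive_zero (f : E → ℝ) (G : E → E) (h : ℕ → ℝ) : IsPrimitive f G h 0 := by
  intro x _
  simp [weight, displacement, cutSum, cut]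

end Certificates

section Silver

theorem padicValNat_pow_add {p k a : ℕ} [Fact p.Prime] (ha : a ≠ 0) (hak : a < p ^ k) :
    padicValNat p (p ^ k + a) = padicValNat p a := by
  have hlt : padicValNat p a < k :=
    (Nat.pow_lt_pow_iff_right (Fact.out : p.Prime).one_lt).1 <|
      (Nat.le_of_dvd (Nat.pos_of_ne_zero ha) pow_padicValNat_dvd).trans_lt hak
  have hp : p ≠ 0 := (Fact.out : p.Prime).ne_zero
  have h := padicValRat.add_eq_of_lt (p := p) (q := a) (r := (p ^ k : ℕ)) (by positivity)
    (by positivity) (by positivity) (by simpa using hlt)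
  rw [add_comm]
  exact_mod_cast h

theorem two_pow_succ_sub_one (k : ℕ) : 2 ^ (k + 1) - 1 = 2 ^ k - 1 + 1 + (2 ^ k - 1) := by
  have := Nat.one_le_two_pow (n := k)
  omega

theorem pow_rpow_log_div_log {a b : ℝ} (ha : 0 < a) (hb : 0 < b) (hb1 : b ≠ 1) (k : ℕ) :
    (b ^ k) ^ (Real.log a / Real.log b) = a ^ k := by
  rw [← Real.rpow_pow_comm hb.le, Real.log_div_log, Real.rpow_logb hb hb1 ha]

/-- The silver ratio `ρ`. -/
noncomputable def silverRatio : ℝ :=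
  1 + √2

local notation "ρ" => silverRatio

theorem silverRatio_sq : ρ ^ 2 = 2 * ρ + 1 := by
  rw [silverRatio]
  linear_combination Real.sq_sqrt (zero_le_two (α := ℝ))

theorem two_lt_silverRatio : 2 < ρ := by
  rw [silverRatio]
  linarith [Real.one_lt_sqrt_two]

theorem silverRatio_pos : 0 < ρ :=
  two_pos.trans two_lt_silverRatio

theorem silverRatio_pow_eq_mul_zpow (k : ℕ) : ρ ^ k = ρ * ρ ^ ((k : ℤ) - 1) := by
  rw [← zpow_one_add₀ silverRatio_pos.ne', add_sub_cancel, zpow_natCast]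

/-- The silver stepsizes `1 + ρ ^ (ν - 1)`, where `ν` is the exponent of `2` in `t + 1`; the
exponent `ν - 1` is an integer, with the value `-1` for even `t`. -/
noncomputable def silverStep (t : ℕ) : ℝ :=
  1 + ρ ^ ((padicValNat 2 (t + 1) : ℤ) - 1)

theorem silverStep_nonneg (t : ℕ) : 0 ≤ silverStep t :=
  add_nonneg zero_le_one (zpow_nonneg silverRatio_pos.le _)

theorem silverStep_two_pow_sub_one (k : ℕ) : silverStep (2 ^ k - 1) = 1 + ρ ^ ((k : ℤ) - 1) := by
  rw [silverStep, Nat.sub_add_cancel Nat.one_le_two_pow, padicValNat.prime_pow]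

theorem silverStep_add_two_pow {k t : ℕ} (ht : t < 2 ^ k - 1) :
    silverStep (2 ^ k - 1 + 1 + t) = silverStep t := by
  rw [silverStep, silverStep, Nat.sub_add_cancel Nat.one_le_two_pow, add_assoc,
    padicValNat_pow_add t.succ_ne_zero (by omega)]

theorem weight_silverStep (k : ℕ) : weight silverStep (2 ^ k - 1) = ρ ^ k := by
  induction k with
  | zero => simp [weight]
  | succ k ih =>
    rw [two_pow_succ_sub_one, weight_concat, weight_congr fun t ↦ silverStep_add_two_pow, ih,
      silverStep_two_pow_sub_one, pow_succ', silverRatio_pow_eq_mul_zpow]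
    linear_combination -(ρ ^ ((k : ℤ) - 1) * silverRatio_sq)

theorem Interpolates.isPrimitive_silverStep {f : E → ℝ} {G : E → E} (hf : Interpolates f G)
    (k : ℕ) : IsPrimitive f G silverStep (2 ^ k - 1) := by
  induction k with
  | zero => exact isPrimitive_zero f G silverStep
  | succ k ih =>
    rw [two_pow_succ_sub_one]
    refine ih.concat (ih.congr fun t ↦ silverStep_add_two_pow) hf (fun t _ ↦ silverStep_nonneg t)
      (silverStep_two_pow_sub_one k) (zpow_pos silverRatio_pos _) ?_
    rw [weight_congr fun t ↦ silverStep_add_two_pow, weight_silverStep,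
      silverRatio_pow_eq_mul_zpow]
    linear_combination -((ρ ^ ((k : ℤ) - 1)) ^ 2 * silverRatio_sq)

theorem sub_le_of_silverStep [CompleteSpace E] {f : E → ℝ} {g : E → E} {M : ℝ} (hM : 0 < M)
    (hf : ConvexOn ℝ Set.univ f) (hg : ∀ x, HasGradientAt f (g x) x)
    (hlip : ∀ x y, ‖g x - g y‖ ≤ M * ‖x - y‖) {k : ℕ} (hk : k ≠ 0) {x : ℕ → E}
    (hx : IsDescent g (fun t ↦ silverStep t / M) (2 ^ k - 1) x) (y : E) :
    f (x (2 ^ k - 1)) - f y ≤ M * ‖x 0 - y‖ ^ 2 / ρ ^ k := by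
  have hinterp := interpolates_of_convexOn hM hf hg hlip
  have hweight : 2 ≤ weight silverStep (2 ^ k - 1) := by
    rw [weight_silverStep]
    exact two_lt_silverRatio.le.trans (le_self_pow₀ (by linarith [two_lt_silverRatio]) hk)
  have hdescent : IsDescent (fun x ↦ M⁻¹ • g x) silverStep (2 ^ k - 1) x := fun t ht ↦ by
    simp only [hx t ht, smul_smul, div_eq_mul_inv]
  have hrate := (hinterp.isPrimitive_silverStep k).sub_le hinterp (fun t _ ↦ silverStep_nonneg t)
    hweight hdescent y
  rw [weight_silverStep, ← sub_div, div_le_iff₀ hM] at hrate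
  exact hrate.trans_eq (by ring)

theorem exists_silverRatio_pow_inv_le {ε : ℝ} (hε : ε ∈ Set.Ioc (0 : ℝ) 1) :
    ∃ k ≠ 0, (ρ ^ k)⁻¹ ≤ ε ∧ (2 : ℝ) ^ k ≤ 2 * ε ^ (-(Real.log 2 / Real.log ρ)) := by
  have hρ : 1 < ρ := one_lt_two.trans two_lt_silverRatio
  obtain ⟨k, hle, hlt⟩ := exists_nat_pow_near (one_le_inv_iff₀.2 hε) hρ
  refine ⟨k + 1, k.succ_ne_zero, inv_le_of_inv_le₀ hε.1 hlt.le, ?_⟩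
  rw [pow_succ', ← pow_rpow_log_div_log two_pos silverRatio_pos hρ.ne', Real.rpow_neg hε.1.le,
    ← Real.inv_rpow hε.1.le]
  have := Real.log_pos hρ
  gcongr

end Silver

end SilverStepsize

theorem silver_stepsizes_convex_general :
    ∃ C : ℝ, 0 < C ∧
      ∀ ε : ℝ, ε ∈ Set.Ioo (0 : ℝ) 1 → ∀ M : ℝ, 0 < M →
        ∃ (n : ℕ) (α : ℕ → ℝ),
          (n : ℝ) ≤ C * ε ^ (-(Real.log 2 / Real.log (1 + Real.sqrt 2))) ∧
          ∀ (E : Type*) [NormedAddCommGroup E] [InnerProductSpace ℝ E] [CompleteSpace E]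
            (f : E → ℝ),
            ConvexOn ℝ Set.univ f →
            Differentiable ℝ f →
            (∀ x y : E, ‖gradient f x - gradient f y‖ ≤ M * ‖x - y‖) →
            ∀ (y : E) (x : ℕ → E),
              (∀ t < n, x (t + 1) = x t - α t • gradient f (x t)) →
              f (x n) - f y ≤ ε * M * ‖x 0 - y‖ ^ 2 := by
  refine ⟨2, two_pos, fun ε hε M hM ↦ ?_⟩
  obtain ⟨k, hk, hkε, hk2⟩ :=
    SilverStepsize.exists_silverRatio_pow_inv_le (Set.Ioo_subset_Ioc_self hε)
  refine ⟨2 ^ k - 1, fun t ↦ SilverStepsize.silverStep t / M, ?_, ?_⟩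
  · calc ((2 ^ k - 1 : ℕ) : ℝ) ≤ 2 ^ k := by exact_mod_cast Nat.sub_le _ _
      _ ≤ _ := hk2
  · intro E _ _ _ f hf hdiff hlip y x hx
    calc f (x (2 ^ k - 1)) - f y ≤ M * ‖x 0 - y‖ ^ 2 / SilverStepsize.silverRatio ^ k :=
          SilverStepsize.sub_le_of_silverStep hM hf (fun z ↦ (hdiff z).hasGradientAt) hlip hk hx y
      _ = (SilverStepsize.silverRatio ^ k)⁻¹ * (M * ‖x 0 - y‖ ^ 2) := by ring
      _ ≤ ε * (M * ‖x 0 - y‖ ^ 2) := by gcongr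
      _ = ε * M * ‖x 0 - y‖ ^ 2 := by ring

/-- **Silver stepsizes for convex optimization** (Theorem 1).
For every accuracy `ε ∈ (0,1)` and smoothness `M > 0`, there is a stepsize schedule of
length `n ≲ ε^(-log_ρ 2)` (where `ρ = 1 + √2` is the silver ratio) such that gradient
descent minimizes any `M`-smooth convex function to error `ε · M‖x₀ - x*‖²`. -/
theorem silver_stepsizes_convex :
    ∃ C : ℝ, 0 < C ∧
      ∀ ε : ℝ, ε ∈ Set.Ioo (0 : ℝ) 1 → ∀ M : ℝ, 0 < M →
        ∃ (n : ℕ) (α : ℕ → ℝ),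
          (n : ℝ) ≤ C * ε ^ (-(Real.log 2 / Real.log (1 + Real.sqrt 2))) ∧
          ∀ (d : ℕ) (f : EuclideanSpace ℝ (Fin d) → ℝ),
            ConvexOn ℝ Set.univ f →
            Differentiable ℝ f →
            (∀ x y : EuclideanSpace ℝ (Fin d),
              ‖gradient f x - gradient f y‖ ≤ M * ‖x - y‖) →
            ∀ xstar : EuclideanSpace ℝ (Fin d), (∀ y, f xstar ≤ f y) →
            ∀ x : ℕ → EuclideanSpace ℝ (Fin d),
              (∀ t, x (t + 1) = x t - α t • gradient f (x t)) →
              f (x n) - f xstar ≤ ε * M * ‖x 0 - xstar‖ ^ 2 := by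
  obtain ⟨C, hC, h⟩ := silver_stepsizes_convex_general
  exact ⟨C, hC, fun ε hε M hM ↦ (h ε hε M hM).imp fun n ↦ .imp fun α ↦ .imp_right
    fun hrate d f hf hdiff hlip xstar _ x hx ↦ hrate _ f hf hdiff hlip xstar x fun t _ ↦ hx t⟩
end

section
/- There is a universal constant C > 0 such that the following holds. Fix M > 0, an integer k ≥ 1, and set n = 2^k − 1. Define the silver stepsize schedule α_t = (1 + ρ^{ν(t+1)−1})/M for t = 0, …, n−1, where ρ = 1 + √2 and ν(t) is the 2-adic valuation of t (the largest integer i with 2^i dividing t). Then for every dimension d, every convex function f : ℝ^d → ℝ that is differentiable with M-Lipschitz gradient and attains a minimizer x*, and every initial point x_0, the gradient descent iterates x_{t+1} = x_t − α_t ∇f(x_t) satisfy f(x_n) − f(x*) ≤ C · M‖x_0 − x*‖² · n^{−log_2 ρ}. -/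
/-!
After rescaling by `M`, a smooth convex function enters only through the interpolation inequalities
between its values and gradients. These allow one to add a virtual minimizer `(z, c)` to the data,
and besides true minimizers every point `y` provides one, namely `(y - ∇f y, f y - ‖∇f y‖² / 2)`.

Writing `s = ρ ^ k`, the schedule of length `2 ^ (k + 1) - 1` consists of two copies of the schedule
of length `2 ^ k - 1` joined by one step of length `1 + s / ρ`. By induction, every block of length
`2 ^ k - 1` from `p` to `q` satisfies, for all virtual minimizers `(z, c)`,
`(s² - s) ‖∇f q‖² + ‖q - z‖² + 2 (s - 1) (f q - c) ≤ ‖p - z‖²`.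
To join two blocks ending at `a` and `b`, the second one is tested not only against `(z, c)` but
also against the virtual minimizers coming from `a` and `b`, which controls `f b - f a`.
-/

open scoped RealInnerProductSpace Gradient
open AffineMap (lineMap)

theorem norm_sub_smul_sq_real {E : Type*} [NormedAddCommGroup E] [InnerProductSpace ℝ E] (x y : E)
    (r : ℝ) : ‖x - r • y‖ ^ 2 = ‖x‖ ^ 2 - 2 * r * ⟪y, x⟫ + r ^ 2 * ‖y‖ ^ 2 := by
  rw [norm_sub_sq_real, real_inner_smul_right, real_inner_comm, norm_smul, mul_pow,
    Real.norm_eq_abs, sq_abs, mul_assoc]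

section Smooth

variable {E : Type*} [NormedAddCommGroup E] [InnerProductSpace ℝ E] [CompleteSpace E] {f : E → ℝ}

theorem hasDerivAt_comp_lineMap_of_hasGradientAt {x y g : E} {t : ℝ}
    (hf : HasGradientAt f g (lineMap x y t)) :
    HasDerivAt (fun t : ℝ => f (lineMap x y t)) ⟪g, y - x⟫ t :=
  hf.hasFDerivAt.comp_hasDerivAt t AffineMap.hasDerivAt_lineMap

theorem add_inner_le_of_convexOn_of_hasGradientAt {s : Set E} (hf : ConvexOn ℝ s f) {x y g : E}
    (hx : x ∈ s) (hy : y ∈ s) (hg : HasGradientAt f g x) : f x + ⟪g, y - x⟫ ≤ f y := by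
  have hslope := (hf.comp_affineMap (lineMap x y)).le_slope_of_hasDerivAt
    (x := (0 : ℝ)) (y := 1) (by simpa using hx) (by simpa using hy) one_pos
    (hasDerivAt_comp_lineMap_of_hasGradientAt (by simpa using hg))
  simp only [slope_def_field, Function.comp_apply, AffineMap.lineMap_apply_one,
    AffineMap.lineMap_apply_zero, sub_zero, div_one] at hslope
  linarith

theorem le_add_inner_gradient_add_of_lipschitz {M : ℝ} (hf : Differentiable ℝ f)
    (hM : ∀ x y, ‖∇ f x - ∇ f y‖ ≤ M * ‖x - y‖) (x y : E) :
    f y ≤ f x + ⟪∇ f x, y - x⟫ + M / 2 * ‖y - x‖ ^ 2 := by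
  let excess (t : ℝ) : ℝ :=
    f (lineMap x y t) - t * ⟪∇ f x, y - x⟫ - M / 2 * ‖y - x‖ ^ 2 * t ^ 2
  have hderiv (t : ℝ) : HasDerivAt excess
      (⟪∇ f (lineMap x y t) - ∇ f x, y - x⟫ - M * ‖y - x‖ ^ 2 * t) t := by
    have h := ((hasDerivAt_comp_lineMap_of_hasGradientAt
      (hf (lineMap x y t)).hasGradientAt).sub ((hasDerivAt_id t).mul_const ⟪∇ f x, y - x⟫)).sub
      ((hasDerivAt_pow 2 t).const_mul (M / 2 * ‖y - x‖ ^ 2))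
    exact h.congr_deriv (by rw [inner_sub_left]; push_cast; ring)
  have hderiv_nonpos {t : ℝ} (ht : 0 ≤ t) :
      ⟪∇ f (lineMap x y t) - ∇ f x, y - x⟫ - M * ‖y - x‖ ^ 2 * t ≤ 0 := by
    have hdist : ‖lineMap x y t - x‖ = t * ‖y - x‖ := by
      rw [← vsub_eq_sub, AffineMap.lineMap_vsub_left, norm_smul, Real.norm_of_nonneg ht,
        vsub_eq_sub]
    refine sub_nonpos.2 ?_
    calc ⟪∇ f (lineMap x y t) - ∇ f x, y - x⟫
        ≤ ‖∇ f (lineMap x y t) - ∇ f x‖ * ‖y - x‖ := real_inner_le_norm _ _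
      _ ≤ M * (t * ‖y - x‖) * ‖y - x‖ := by gcongr; exact hdist ▸ hM _ _
      _ = M * ‖y - x‖ ^ 2 * t := by ring
  have hanti : AntitoneOn excess (Set.Icc 0 1) :=
    antitoneOn_of_hasDerivWithinAt_nonpos (convex_Icc 0 1)
      (fun t _ => (hderiv t).continuousAt.continuousWithinAt)
      (fun t _ => (hderiv t).hasDerivWithinAt)
      (fun t ht => hderiv_nonpos (interior_subset ht).1)
  have hle : excess 1 ≤ excess 0 :=
    hanti (Set.left_mem_Icc.2 zero_le_one) (Set.right_mem_Icc.2 zero_le_one) zero_le_one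
  simp only [excess, AffineMap.lineMap_apply_one, AffineMap.lineMap_apply_zero] at hle
  linarith

/-- The tangent at `y` and the quadratic upper bound at `x` are compared where they differ least, at
`x - M⁻¹ • (∇ f x - ∇ f y)`. -/
theorem add_inner_gradient_add_sq_le_of_convexOn {M : ℝ} (hM : 0 < M)
    (hc : ConvexOn ℝ Set.univ f) (hf : Differentiable ℝ f)
    (hL : ∀ x y, ‖∇ f x - ∇ f y‖ ≤ M * ‖x - y‖) (x y : E) :
    f y + ⟪∇ f y, x - y⟫ + ‖∇ f x - ∇ f y‖ ^ 2 / (2 * M) ≤ f x := by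
  set w := ∇ f x - ∇ f y
  have hupper := le_add_inner_gradient_add_of_lipschitz hf hL x (x - M⁻¹ • w)
  have hlower := add_inner_le_of_convexOn_of_hasGradientAt hc (Set.mem_univ y)
    (Set.mem_univ (x - M⁻¹ • w)) (hf y).hasGradientAt
  have hinner : ⟪∇ f x, w⟫ - ⟪∇ f y, w⟫ = ‖w‖ ^ 2 := by
    rw [← inner_sub_left, real_inner_self_eq_norm_sq]
  rw [sub_sub_cancel_left, norm_neg, norm_smul, mul_pow, inner_neg_right, real_inner_smul_right,
    Real.norm_of_nonneg (inv_nonneg.2 hM.le)] at hupper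
  rw [sub_right_comm, inner_sub_right, real_inner_smul_right] at hlower
  calc f y + ⟪∇ f y, x - y⟫ + ‖w‖ ^ 2 / (2 * M)
      ≤ f x - M⁻¹ * (⟪∇ f x, w⟫ - ⟪∇ f y, w⟫) + M / 2 * (M⁻¹ ^ 2 * ‖w‖ ^ 2)
          + ‖w‖ ^ 2 / (2 * M) := by linarith
    _ = f x := by rw [hinner]; field_simp; ring

end Smooth

/-- The silver ratio `ρ`, the growth factor of the parameter of a silver block under doubling. -/
noncomputable def silverRatio : ℝ := 1 + √2

local notation "ρ" => silverRatio

theorem silverRatio_sq : ρ ^ 2 = 2 * ρ + 1 := by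
  have h : √2 ^ 2 = 2 := Real.sq_sqrt zero_le_two
  rw [silverRatio]
  linear_combination h

theorem two_le_silverRatio : 2 ≤ ρ := by
  have h : 1 ≤ √2 := Real.one_le_sqrt.2 one_le_two
  rw [silverRatio]
  linarith

theorem silverRatio_pos : 0 < ρ := two_pos.trans_le two_le_silverRatio

theorem silverRatio_inv : ρ⁻¹ = ρ - 2 :=
  inv_eq_of_mul_eq_one_left (by linear_combination silverRatio_sq)

section SilverBlock

variable {E : Type*} [NormedAddCommGroup E] [InnerProductSpace ℝ E] {f : E → ℝ} {G : E → E}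

/-- The interpolation inequalities of a `1`-smooth convex function with values `f` and gradients
`G`; the rest of the argument uses nothing else about the function. -/
def SatisfiesInterpolation (f : E → ℝ) (G : E → E) : Prop :=
  ∀ x y, f y + ⟪G y, x - y⟫ + ‖G x - G y‖ ^ 2 / 2 ≤ f x

/-- The pair `(z, c)` is a virtual minimizer: the interpolation inequalities allow a critical point
at `z` with value `c`. The value `c` is not required to be `f z`. -/
def IsVirtualMinimizer (f : E → ℝ) (G : E → E) (z : E) (c : ℝ) : Prop :=
  ∀ y, f y + ⟪G y, z - y⟫ + ‖G y‖ ^ 2 / 2 ≤ c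

/-- The energy, at the point `y` and relative to the virtual minimizer `(z, c)`, that bounds the
progress of a silver block with parameter `s`; the parameter of a block of `2 ^ k - 1` steps is
`ρ ^ k`. -/
noncomputable def silverEnergy (f : E → ℝ) (G : E → E) (s : ℝ) (z : E) (c : ℝ) (y : E) : ℝ :=
  (s ^ 2 - s) * ‖G y‖ ^ 2 + ‖y - z‖ ^ 2 + 2 * (s - 1) * (f y - c)

/-- The energy inequality satisfied by the endpoints `p` and `q` of a silver block with parameter
`s`, with respect to all virtual minimizers. Only the endpoints of the block are recorded. -/
def IsSilverBlock (f : E → ℝ) (G : E → E) (s : ℝ) (p q : E) : Prop :=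
  ∀ ⦃z c⦄, IsVirtualMinimizer f G z c → silverEnergy f G s z c q ≤ ‖p - z‖ ^ 2

theorem satisfiesInterpolation_of_convexOn [CompleteSpace E] {M : ℝ} (hM : 0 < M)
    (hc : ConvexOn ℝ Set.univ f) (hf : Differentiable ℝ f)
    (hL : ∀ x y, ‖∇ f x - ∇ f y‖ ≤ M * ‖x - y‖) :
    SatisfiesInterpolation (fun x => f x / M) (fun x => M⁻¹ • ∇ f x) := fun x y => by
  have h := div_le_div_of_nonneg_right (add_inner_gradient_add_sq_le_of_convexOn hM hc hf hL x y)
    hM.le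
  rw [← smul_sub, norm_smul, Real.norm_of_nonneg (inv_nonneg.2 hM.le), real_inner_smul_left]
  refine le_trans (le_of_eq ?_) h
  field_simp

theorem SatisfiesInterpolation.isVirtualMinimizer_sub (h : SatisfiesInterpolation f G) (x : E) :
    IsVirtualMinimizer f G (x - G x) (f x - ‖G x‖ ^ 2 / 2) := fun y => by
  have hxy := h x y
  rw [norm_sub_sq_real, real_inner_comm (G y) (G x)] at hxy
  rw [sub_right_comm, inner_sub_right]
  linarith

theorem isSilverBlock_one (p : E) : IsSilverBlock f G 1 p p := fun z c _ => by
  simp [silverEnergy]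

theorem IsSilverBlock.mul_sub_le {s : ℝ} {p q z : E} {c : ℝ} (h : IsSilverBlock f G s p q)
    (hs : 0 ≤ s) (hz : IsVirtualMinimizer f G z c) : (4 * s - 2) * (f q - c) ≤ ‖p - z‖ ^ 2 := by
  have henergy : (s ^ 2 - s) * ‖G q‖ ^ 2 + ‖q - z‖ ^ 2 + 2 * (s - 1) * (f q - c) ≤ ‖p - z‖ ^ 2 :=
    h hz
  have hsq : 0 ≤ ‖q - z‖ ^ 2 - 2 * s * ⟪G q, q - z⟫ + s ^ 2 * ‖G q‖ ^ 2 :=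
    norm_sub_smul_sq_real (q - z) (G q) s ▸ sq_nonneg _
  have hq := hz q
  rw [← neg_sub q z, inner_neg_right] at hq
  linear_combination henergy + hsq + 2 * s * hq

theorem IsSilverBlock.sq_norm_le {s : ℝ} {p q : E} (hq : IsSilverBlock f G s p q)
    (h : SatisfiesInterpolation f G) : s ^ 2 * ‖G q‖ ^ 2 ≤ ‖p - (q - G q)‖ ^ 2 := by
  have henergy := hq (h.isVirtualMinimizer_sub q)
  rw [silverEnergy, sub_sub_cancel] at henergy
  linear_combination henergy

/-- The block inequalities for the virtual minimizers of `a` and `b`, both with weight `ρ`, and the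
interpolation inequalities between `a` and `b`, with weights `2 * ρ` and `2 * s`, add up to
`(ρ - 1) * s` times the claim: the terms involving `a - b` cancel. -/
theorem IsSilverBlock.two_mul_sub_add_mul_sq_norm_le {s : ℝ} {a b : E} (hs : 0 < s)
    (h : SatisfiesInterpolation f G) (hb : IsSilverBlock f G s (a - (1 + ρ⁻¹ * s) • G a) b) :
    2 * (f b - f a) + ((1 + ρ) * s - 1) * ‖G b‖ ^ 2 ≤ ((1 - ρ⁻¹) * s - 1) * ‖G a‖ ^ 2 := by
  have hρ := two_le_silverRatio
  have hba : f b + ⟪G b, a - b⟫ + (‖G a‖ ^ 2 - 2 * ⟪G a, G b⟫ + ‖G b‖ ^ 2) / 2 ≤ f a := by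
    rw [← norm_sub_sq_real]
    exact h a b
  have hab : f a - ⟪G a, a - b⟫ + (‖G a‖ ^ 2 - 2 * ⟪G a, G b⟫ + ‖G b‖ ^ 2) / 2 ≤ f b := by
    rw [← norm_sub_sq_real, norm_sub_rev, sub_eq_add_neg, ← inner_neg_right, neg_sub]
    exact h b a
  have hmin_a : (s ^ 2 - s) * ‖G b‖ ^ 2 + (‖a - b‖ ^ 2 - 2 * ⟪G a, a - b⟫ + ‖G a‖ ^ 2) +
      2 * (s - 1) * (f b - (f a - ‖G a‖ ^ 2 / 2)) ≤ (ρ⁻¹ * s) ^ 2 * ‖G a‖ ^ 2 := by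
    have := hb (h.isVirtualMinimizer_sub a)
    rwa [silverEnergy, show b - (a - G a) = G a - (a - b) by abel, norm_sub_rev,
      norm_sub_sq_real, real_inner_comm,
      show a - (1 + ρ⁻¹ * s) • G a - (a - G a) = -((ρ⁻¹ * s) • G a) by module, norm_neg, norm_smul,
      mul_pow, Real.norm_eq_abs, sq_abs] at this
  have hmin_b : s ^ 2 * ‖G b‖ ^ 2 ≤ ‖a - b‖ ^ 2 + 2 * ⟪G b, a - b⟫ + ‖G b‖ ^ 2 -
      2 * (1 + ρ⁻¹ * s) * (⟪G a, a - b⟫ + ⟪G a, G b⟫) + (1 + ρ⁻¹ * s) ^ 2 * ‖G a‖ ^ 2 := by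
    have := hb.sq_norm_le h
    rwa [show a - (1 + ρ⁻¹ * s) • G a - (b - G b) = (a - b) + G b - (1 + ρ⁻¹ * s) • G a by abel,
      norm_sub_smul_sq_real, inner_add_right, norm_add_sq_real, real_inner_comm] at this
  rw [silverRatio_inv] at hmin_a hmin_b ⊢
  refine le_of_mul_le_mul_left ?_ (mul_pos (by linarith : 0 < ρ - 1) hs)
  linear_combination ρ * hmin_a + ρ * hmin_b + 2 * ρ * hba + 2 * s * hab +
    (2 * s * (‖G a‖ ^ 2 - ⟪G a, G b⟫ - ⟪G a, a - b⟫) +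
      s ^ 2 * ((2 * ρ - 3) * ‖G a‖ ^ 2 + ‖G b‖ ^ 2)) * silverRatio_sq

theorem IsSilverBlock.join {s : ℝ} {p a b : E} (hs : 0 < s) (h : SatisfiesInterpolation f G)
    (ha : IsSilverBlock f G s p a) (hb : IsSilverBlock f G s (a - (1 + ρ⁻¹ * s) • G a) b) :
    IsSilverBlock f G (ρ * s) p b := fun z c hz => by
  have hρ := two_le_silverRatio
  have hμ : 0 ≤ 1 + ρ⁻¹ * s := by have := silverRatio_pos; positivity
  have hza : f a - ⟪G a, a - z⟫ + ‖G a‖ ^ 2 / 2 ≤ c := by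
    rw [sub_eq_add_neg, ← inner_neg_right, neg_sub]
    exact hz a
  have hfirst : (s ^ 2 - s) * ‖G a‖ ^ 2 + ‖a - z‖ ^ 2 + 2 * (s - 1) * (f a - c) ≤ ‖p - z‖ ^ 2 :=
    ha hz
  have hsecond : (s ^ 2 - s) * ‖G b‖ ^ 2 + ‖b - z‖ ^ 2 + 2 * (s - 1) * (f b - c) ≤
      ‖a - z‖ ^ 2 - 2 * (1 + ρ⁻¹ * s) * ⟪G a, a - z⟫ + (1 + ρ⁻¹ * s) ^ 2 * ‖G a‖ ^ 2 := by
    rw [← norm_sub_smul_sq_real, sub_right_comm]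
    exact hb hz
  have hdecrease := mul_le_mul_of_nonneg_left (hb.two_mul_sub_add_mul_sq_norm_le hs h)
    (mul_nonneg (by linarith : 0 ≤ ρ - 1) hs.le)
  rw [silverRatio_inv] at hμ hsecond hdecrease
  rw [silverEnergy]
  linear_combination hfirst + hsecond + hdecrease + 2 * (1 + (ρ - 2) * s) * hza

end SilverBlock

section Schedule

theorem padicValNat_add_pow {p k i : ℕ} (hp : 1 < p) (hi : p ^ (k + 1) ∣ i) :
    padicValNat p (i + p ^ k) = k := by
  obtain ⟨c, rfl⟩ := hi
  have hndvd : ¬p ∣ p * c + 1 :=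
    (Nat.dvd_add_right (dvd_mul_right p c)).not.2 (Nat.not_dvd_of_pos_of_lt one_pos hp)
  rw [show p ^ (k + 1) * c + p ^ k = p ^ k * (p * c + 1) by ring,
    padicValNat_base_pow_mul hp (Nat.succ_ne_zero _), padicValNat.eq_zero_of_not_dvd hndvd,
    zero_add]

/-- The silver stepsize at time `t` for smoothness constant `1`. The exponent is an integer because
it equals `-1` at even `t`. -/
noncomputable def silverStep (t : ℕ) : ℝ := 1 + ρ ^ ((padicValNat 2 (t + 1) : ℤ) - 1)

theorem silverStep_add_of_dvd {k i : ℕ} (hi : 2 ^ (k + 1) ∣ i) :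
    silverStep (i + (2 ^ k - 1)) = 1 + ρ⁻¹ * ρ ^ k := by
  rw [silverStep, add_assoc, Nat.sub_add_cancel Nat.one_le_two_pow,
    padicValNat_add_pow one_lt_two hi, zpow_sub_one₀ silverRatio_pos.ne', zpow_natCast, mul_comm]

variable {E : Type*} [NormedAddCommGroup E] [InnerProductSpace ℝ E] {f : E → ℝ}

theorem isSilverBlock_of_dvd {G : E → E} (h : SatisfiesInterpolation f G) {x : ℕ → E}
    (hx : ∀ t, x (t + 1) = x t - silverStep t • G (x t)) (k : ℕ) {i : ℕ} (hi : 2 ^ k ∣ i) :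
    IsSilverBlock f G (ρ ^ k) (x i) (x (i + (2 ^ k - 1))) := by
  induction k generalizing i with
  | zero => exact isSilverBlock_one (x i)
  | succ k ih =>
    have hik : 2 ^ k ∣ i := (pow_dvd_pow 2 k.le_succ).trans hi
    have hpos : 0 < 2 ^ k := by positivity
    have hstart : x (i + 2 ^ k) =
        x (i + (2 ^ k - 1)) - (1 + ρ⁻¹ * ρ ^ k) • G (x (i + (2 ^ k - 1))) := by
      rw [← silverStep_add_of_dvd hi, ← hx, add_assoc, Nat.sub_add_cancel hpos]
    have hend : i + (2 ^ (k + 1) - 1) = i + 2 ^ k + (2 ^ k - 1) := by omega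
    rw [pow_succ', hend]
    exact (ih hik).join (pow_pos silverRatio_pos k) h (hstart ▸ ih (hik.add dvd_rfl))

variable [CompleteSpace E]

theorem gradient_eq_zero_of_forall_le {z : E} (hz : ∀ y, f z ≤ f y) : ∇ f z = 0 := by
  rw [gradient, IsLocalMin.fderiv_eq_zero (Filter.Eventually.of_forall hz), map_zero]

theorem mul_sub_le_of_silverStep {M : ℝ} (hM : 0 < M) (k : ℕ) (hc : ConvexOn ℝ Set.univ f)
    (hf : Differentiable ℝ f) (hL : ∀ x y, ‖∇ f x - ∇ f y‖ ≤ M * ‖x - y‖) {z : E}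
    (hz : ∀ y, f z ≤ f y) {x : ℕ → E}
    (hx : ∀ t, x (t + 1) = x t - (silverStep t / M) • ∇ f (x t)) :
    (4 * ρ ^ k - 2) * (f (x (2 ^ k - 1)) - f z) ≤ M * ‖x 0 - z‖ ^ 2 := by
  have hinterp := satisfiesInterpolation_of_convexOn hM hc hf hL
  have hblock := isSilverBlock_of_dvd hinterp (x := x)
    (fun t => by rw [hx, smul_smul, div_eq_mul_inv]) k (dvd_zero _)
  have hmin : IsVirtualMinimizer (fun y => f y / M) (fun y => M⁻¹ • ∇ f y) z (f z / M) := by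
    simpa [gradient_eq_zero_of_forall_le hz] using hinterp.isVirtualMinimizer_sub z
  have hle := hblock.mul_sub_le (pow_nonneg silverRatio_pos.le k) hmin
  rwa [zero_add, ← sub_div, mul_div_assoc', div_le_iff₀' hM] at hle

theorem inv_pow_le_rpow_neg_log_div_log {a b x : ℝ} {k : ℕ} (ha : 1 ≤ a) (hb : 1 < b)
    (hx : 0 < x) (hxb : x ≤ b ^ k) : (a ^ k)⁻¹ ≤ x ^ (-(Real.log a / Real.log b)) := by
  have hb0 : 0 < b := one_pos.trans hb
  calc (a ^ k)⁻¹ = (b ^ k) ^ (-(Real.log a / Real.log b)) := by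
        rw [Real.log_div_log, Real.rpow_neg (by positivity), ← Real.rpow_pow_comm hb0.le,
          Real.rpow_logb hb0 hb.ne' (one_pos.trans_le ha)]
    _ ≤ x ^ (-(Real.log a / Real.log b)) :=
        Real.rpow_le_rpow_of_nonpos hx hxb
          (neg_nonpos.2 (div_nonneg (Real.log_nonneg ha) (Real.log_nonneg hb.le)))

theorem silver_stepsize_schedule_rate_general {M : ℝ} (hM : 0 < M) {k : ℕ} (hk : 1 ≤ k)
    (hc : ConvexOn ℝ Set.univ f) (hf : Differentiable ℝ f)
    (hL : ∀ x y, ‖∇ f x - ∇ f y‖ ≤ M * ‖x - y‖) {z : E} (hz : ∀ y, f z ≤ f y) {x : ℕ → E}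
    (hx : ∀ t, x (t + 1) = x t - (silverStep t / M) • ∇ f (x t)) :
    f (x (2 ^ k - 1)) - f z ≤
      1 / 2 * M * ‖x 0 - z‖ ^ 2 * ((2 ^ k - 1 : ℕ) : ℝ) ^ (-(Real.log ρ / Real.log 2)) := by
  have hρ : 1 ≤ ρ := one_le_two.trans two_le_silverRatio
  have hpow : 1 ≤ ρ ^ k := one_le_pow₀ hρ
  have hn : 0 < 2 ^ k - 1 := Nat.sub_pos_of_lt (Nat.one_lt_two_pow (Nat.one_le_iff_ne_zero.1 hk))
  have hrate := inv_pow_le_rpow_neg_log_div_log hρ one_lt_two (Nat.cast_pos.2 hn)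
    (by exact_mod_cast Nat.sub_le (2 ^ k) 1)
  calc f (x (2 ^ k - 1)) - f z ≤ 1 / 2 * M * ‖x 0 - z‖ ^ 2 * (ρ ^ k)⁻¹ := by
        have hgap : 0 ≤ f (x (2 ^ k - 1)) - f z := sub_nonneg.2 (hz _)
        have hcoeff : 2 * ρ ^ k * (f (x (2 ^ k - 1)) - f z) ≤
            (4 * ρ ^ k - 2) * (f (x (2 ^ k - 1)) - f z) :=
          mul_le_mul_of_nonneg_right (by linarith) hgap
        rw [← div_eq_mul_inv, le_div_iff₀ (by positivity)]
        linarith [mul_sub_le_of_silverStep hM k hc hf hL hz hx]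
    _ ≤ 1 / 2 * M * ‖x 0 - z‖ ^ 2 * ((2 ^ k - 1 : ℕ) : ℝ) ^ (-(Real.log ρ / Real.log 2)) := by
        gcongr

end Schedule

/-- **The silver stepsize schedule accelerates gradient descent for smooth convex
optimization.** With `ρ = 1 + √2`, `n = 2^k - 1`, and the explicit silver stepsizes
`α_t = (1 + ρ^(ν(t+1) - 1))/M` (where `ν` is the 2-adic valuation), gradient descent on
any `M`-smooth convex function satisfies `f(xₙ) - f(x*) ≤ C · M‖x₀ - x*‖² · n^(-log₂ ρ)`. -/
theorem silver_stepsize_schedule_rate :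
    ∃ C : ℝ, 0 < C ∧
      ∀ M : ℝ, 0 < M → ∀ k : ℕ, 1 ≤ k →
        ∀ n : ℕ, n = 2 ^ k - 1 →
        ∀ α : ℕ → ℝ,
          (∀ t, α t = (1 + (1 + Real.sqrt 2) ^ ((padicValNat 2 (t + 1) : ℤ) - 1)) / M) →
          ∀ (d : ℕ) (f : EuclideanSpace ℝ (Fin d) → ℝ),
            ConvexOn ℝ Set.univ f →
            Differentiable ℝ f →
            (∀ x y : EuclideanSpace ℝ (Fin d),
              ‖gradient f x - gradient f y‖ ≤ M * ‖x - y‖) →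
            ∀ xstar : EuclideanSpace ℝ (Fin d), (∀ y, f xstar ≤ f y) →
            ∀ x : ℕ → EuclideanSpace ℝ (Fin d),
              (∀ t, x (t + 1) = x t - α t • gradient f (x t)) →
              f (x n) - f xstar ≤
                C * M * ‖x 0 - xstar‖ ^ 2 *
                  (n : ℝ) ^ (-(Real.log (1 + Real.sqrt 2) / Real.log 2)) := by
  refine ⟨1 / 2, one_half_pos, fun M hM k hk n hn α hα d f hc hf hL xstar hmin x hx => ?_⟩
  exact hn ▸ silver_stepsize_schedule_rate_general hM hk hc hf hL hmin fun t => hα t ▸ hx t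
end

section
/- Let 0 < m < M, set S = √(M² + (M−m)²), α_0 = 2/(m+S), α_1 = 2/(2M+m−S), and R_2 = (S−M)/(2m+S−M). Then for every dimension d, every function f : ℝ^d → ℝ that is m-strongly convex and differentiable with M-Lipschitz gradient, with minimizer x*, and every initial point x_0, the two gradient descent iterates x_1 = x_0 − α_0 ∇f(x_0) and x_2 = x_1 − α_1 ∇f(x_1) satisfy ‖x_2 − x*‖ ≤ R_2 ‖x_0 − x*‖. -/
/-!
Subtracting `m / 2 * ‖x - x⋆‖ ^ 2` from `f` leaves a convex, `(M - m)`-smooth function `h` that is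
critical at `x⋆`. For such an `h`, the difference `h x - h y - ⟪∇h y, x - y⟫` is at least
`‖∇h x - ∇h y‖ ^ 2 / (2 * (M - m))`. The rate is certified by writing
`R₂ ^ 2 * ‖x₀ - x⋆‖ ^ 2 - ‖x₂ - x⋆‖ ^ 2` as a nonnegative combination of five of these inequalities
between `x⋆`, `x₀` and `x₁`. The stepsizes are those for which three extremal functions on the line
contract equally (see `IsOptimalTwoStep`), and these equalities make the coefficients match.
-/

open scoped RealInnerProductSpace Gradient

section NormedSpace

variable {E : Type*} [NormedAddCommGroup E] [NormedSpace ℝ E]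

lemma hasDerivAt_comp_add_smul {f : E → ℝ} {x v : E} {t : ℝ} {f' : E →L[ℝ] ℝ}
    (hf : HasFDerivAt f f' (x + t • v)) : HasDerivAt (fun t : ℝ => f (x + t • v)) (f' v) t := by
  have hline : HasDerivAt (fun t : ℝ => x + t • v) v t := by
    simpa using ((hasDerivAt_id t).smul_const v).const_add x
  exact hf.comp_hasDerivAt t hline

lemma convexOn_add_fderiv_le {s : Set E} {f : E → ℝ} {f' : E →L[ℝ] ℝ} {x y : E}
    (hconv : ConvexOn ℝ s f) (hx : x ∈ s) (hy : y ∈ s) (hf : HasFDerivAt f f' x) :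
    f x + f' (y - x) ≤ f y := by
  have hline := hconv.comp_affineMap (AffineMap.lineMap x y : ℝ →ᵃ[ℝ] E)
  have hderiv : HasDerivAt (f ∘ (AffineMap.lineMap x y : ℝ →ᵃ[ℝ] E)) (f' (y - x)) 0 :=
    HasFDerivAt.comp_hasDerivAt 0 (by simpa using hf) AffineMap.hasDerivAt_lineMap
  have hslope := hline.le_slope_of_hasDerivAt (x := 0) (y := 1) (by simpa using hx)
    (by simpa using hy) zero_lt_one hderiv
  simp only [slope_def_field, Function.comp_apply, AffineMap.lineMap_apply_zero,
    AffineMap.lineMap_apply_one, sub_zero, div_one] at hslope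
  linarith

lemma le_add_fderiv_add_sq_of_lipschitz {f : E → ℝ} {f' : E → E →L[ℝ] ℝ} {M : ℝ} {x : E}
    (hf : ∀ z, HasFDerivAt f (f' z) z) (hlip : ∀ z, ‖f' z - f' x‖ ≤ M * ‖z - x‖) (y : E) :
    f y ≤ f x + f' x (y - x) + M / 2 * ‖y - x‖ ^ 2 := by
  set v := y - x with hv
  have hderiv (t : ℝ) := hasDerivAt_comp_add_smul (v := v) (hf (x + t • v))
  have hbound (t : ℝ) : HasDerivAt (fun t : ℝ => f x + t * f' x v + M / 2 * ‖v‖ ^ 2 * t ^ 2)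
      (f' x v + M * ‖v‖ ^ 2 * t) t := by
    refine ((((hasDerivAt_id' t).mul_const (f' x v)).const_add (f x)).fun_add
      ((hasDerivAt_pow 2 t).const_mul (M / 2 * ‖v‖ ^ 2))).congr_deriv ?_
    push_cast
    ring
  have hle (t : ℝ) (ht : 0 ≤ t) : f' (x + t • v) v ≤ f' x v + M * ‖v‖ ^ 2 * t := by
    have hlip_t := hlip (x + t • v)
    rw [add_sub_cancel_left, norm_smul, Real.norm_of_nonneg ht] at hlip_t
    calc f' (x + t • v) v = f' x v + (f' (x + t • v) - f' x) v := by simp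
      _ ≤ f' x v + M * (t * ‖v‖) * ‖v‖ := by
        gcongr
        exact (Real.le_norm_self _).trans (ContinuousLinearMap.le_of_opNorm_le _ hlip_t v)
      _ = f' x v + M * ‖v‖ ^ 2 * t := by ring
  have h_one := image_le_of_deriv_right_le_deriv_boundary
    (fun t _ => (hderiv t).continuousAt.continuousWithinAt)
    (fun t _ => (hderiv t).hasDerivWithinAt) (by simp)
    (fun t _ => (hbound t).continuousAt.continuousWithinAt)
    (fun t _ => (hbound t).hasDerivWithinAt) (fun t ht => hle t ht.1)
    (Set.right_mem_Icc.2 (zero_le_one' ℝ))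
  simpa [hv] using h_one

end NormedSpace

section Interpolation

variable {E : Type*} [NormedAddCommGroup E] [InnerProductSpace ℝ E]

/-- The slack in the interpolation inequality of a convex `L`-smooth function `h` with gradient
field `g`, multiplied by `L` to keep certificates polynomial. The field is a separate argument, so
that the algebra of certificates needs no differentiability. -/
noncomputable def interpolationGap (L : ℝ) (h : E → ℝ) (g : E → E) (x y : E) : ℝ :=
  L * (h x - h y - ⟪g y, x - y⟫) - ‖g x - g y‖ ^ 2 / 2

lemma interpolationGap_nonneg {L : ℝ} (hL : 0 < L) {h : E → ℝ} {g : E → E}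
    (hlower : ∀ x y, h x + ⟪g x, y - x⟫ ≤ h y)
    (hupper : ∀ x y, h y ≤ h x + ⟪g x, y - x⟫ + L / 2 * ‖y - x‖ ^ 2) (x y : E) :
    0 ≤ interpolationGap L h g x y := by
  -- Compare the two bounds at the minimizer over `z` of the upper bound minus the lower one.
  set w := g x - g y with hw
  set z := x - L⁻¹ • w with hz
  have hzx : z - x = -(L⁻¹ • w) := by rw [hz]; abel
  have hzy : z - y = (x - y) - L⁻¹ • w := by rw [hz]; abel
  have hsum := (hlower y z).trans (hupper x z)
  have hinner : ⟪g x, w⟫ - ⟪g y, w⟫ = ‖w‖ ^ 2 := by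
    rw [← inner_sub_left, real_inner_self_eq_norm_sq]
  rw [hzx, hzy, norm_neg, norm_smul, mul_pow, Real.norm_eq_abs, sq_abs, inner_neg_right,
    inner_sub_right, real_inner_smul_right, real_inner_smul_right] at hsum
  have hscaled := mul_le_mul_of_nonneg_left hsum hL.le
  have hcancel : L * L⁻¹ = 1 := mul_inv_cancel₀ hL.ne'
  rw [interpolationGap, ← hw]
  linear_combination hscaled - L * L⁻¹ * hinner + (L * L⁻¹ - 1) / 2 * ‖w‖ ^ 2 * hcancel

lemma norm_sub_sq_sub_norm_sub_sq (x y c : E) :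
    ‖y - c‖ ^ 2 - ‖x - c‖ ^ 2 = 2 * ⟪x - c, y - x⟫ + ‖y - x‖ ^ 2 := by
  rw [← sub_add_sub_cancel y x c, norm_add_sq_real, real_inner_comm]
  ring

variable [CompleteSpace E]

lemma le_add_inner_gradient_add_sq {f : E → ℝ} {M : ℝ} (hf : Differentiable ℝ f)
    (hlip : ∀ x y, ‖∇ f x - ∇ f y‖ ≤ M * ‖x - y‖) (x y : E) :
    f y ≤ f x + ⟪∇ f x, y - x⟫ + M / 2 * ‖y - x‖ ^ 2 := by
  rw [inner_gradient_left]
  refine le_add_fderiv_add_sq_of_lipschitz (fun z => (hf z).hasFDerivAt) (fun z => ?_) y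
  simpa only [← toDual_gradient, ← map_sub, LinearIsometryEquiv.norm_map] using hlip z x

lemma strongConvexOn_add_inner_gradient_add_sq_le {s : Set E} {f : E → ℝ} {m : ℝ} {x y : E}
    (hconv : StrongConvexOn s m f) (hx : x ∈ s) (hy : y ∈ s) (hf : DifferentiableAt ℝ f x) :
    f x + ⟪∇ f x, y - x⟫ + m / 2 * ‖y - x‖ ^ 2 ≤ f y := by
  have htangent := convexOn_add_fderiv_le (strongConvexOn_iff_convex.1 hconv) hx hy
    (hf.hasFDerivAt.fun_sub ((hasStrictFDerivAt_norm_sq x).hasFDerivAt.const_mul (m / 2)))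
  have hexpand := norm_sub_sq_sub_norm_sub_sq x y 0
  simp only [sub_zero] at hexpand
  simp only [sub_apply, smul_apply, coe_innerSL_apply, nsmul_eq_mul, Nat.cast_ofNat,
    smul_eq_mul] at htangent
  rw [inner_gradient_left]
  linear_combination htangent - m / 2 * hexpand

lemma interpolationGap_sub_sq_nonneg {f : E → ℝ} {m M : ℝ} (hmM : m < M)
    (hconv : StrongConvexOn Set.univ m f) (hf : Differentiable ℝ f)
    (hlip : ∀ x y, ‖∇ f x - ∇ f y‖ ≤ M * ‖x - y‖) (c x y : E) :
    0 ≤ interpolationGap (M - m) (fun z => f z - m / 2 * ‖z - c‖ ^ 2)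
      (fun z => ∇ f z - m • (z - c)) x y := by
  refine interpolationGap_nonneg (sub_pos.2 hmM) (fun x y => ?_) (fun x y => ?_) x y
  · have hlower := strongConvexOn_add_inner_gradient_add_sq_le hconv (Set.mem_univ x)
      (Set.mem_univ y) (hf x)
    rw [inner_sub_left, real_inner_smul_left]
    linear_combination hlower + m / 2 * norm_sub_sq_sub_norm_sub_sq x y c
  · have hupper := le_add_inner_gradient_add_sq hf hlip x y
    rw [inner_sub_left, real_inner_smul_left]
    linear_combination hupper - m / 2 * norm_sub_sq_sub_norm_sub_sq x y c

lemma gradient_eq_zero_of_isLocalMin {f : E → ℝ} {c : E} (hmin : IsLocalMin f c) : ∇ f c = 0 := by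
  simp [gradient, hmin.fderiv_eq_zero]

end Interpolation

/-- Two stepsizes are optimal for curvatures in `[m, M]` when three functions on the line with
minimizer `0` contract by the same factor: the quadratics of curvature `m` and `M`, and the
Huber-type function whose curvature is `M` up to `x₁` and `m` beyond. In the Huber-type case
`x₁ = (1 - α₀ * m) / (1 + α₀ * (M - m)) * x₀`, and the second step overshoots: its factor
`1 - α₁ * M` is negative. -/
structure IsOptimalTwoStep (m M α₀ α₁ : ℝ) : Prop where
  pos : 0 < α₀
  mul_le_one : α₁ * m ≤ 1
  quadratic_balance : (1 - α₀ * M) * (1 - α₁ * M) = (1 - α₀ * m) * (1 - α₁ * m)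
  huber_balance : α₁ * M - 1 = (1 - α₁ * m) * (1 + α₀ * (M - m))

lemma sqrt_sq_add_sub_sq_mem_Ioo {m M : ℝ} (hm : 0 ≤ m) (hmM : m < M) :
    √(M ^ 2 + (M - m) ^ 2) ∈ Set.Ioo M (2 * M - m) := by
  constructor
  · exact Real.lt_sqrt_of_sq_lt (lt_add_of_pos_right _ (pow_pos (sub_pos.2 hmM) 2))
  · rw [Real.sqrt_lt' (by linarith)]
    nlinarith [mul_pos (hm.trans_lt hmM) (sub_pos.2 hmM)]

lemma isOptimalTwoStep_of_sqrt {m M S α₀ α₁ : ℝ} (hm : 0 ≤ m) (hmM : m < M)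
    (hS : S = √(M ^ 2 + (M - m) ^ 2))
    (hα₀ : α₀ = 2 / (m + S)) (hα₁ : α₁ = 2 / (2 * M + m - S)) :
    IsOptimalTwoStep m M α₀ α₁ := by
  obtain ⟨hMS, hSM⟩ : M < S ∧ S < 2 * M - m := hS ▸ sqrt_sq_add_sub_sq_mem_Ioo hm hmM
  have hS_sq : S ^ 2 = M ^ 2 + (M - m) ^ 2 := by rw [hS, Real.sq_sqrt (by positivity)]
  have hden₀ : 0 < m + S := by linarith
  have hden₁ : 0 < 2 * M + m - S := by linarith
  subst hα₀ hα₁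
  refine ⟨by positivity, ?_, ?_, ?_⟩
  · rw [div_mul_eq_mul_div, div_le_one hden₁]
    linarith
  · field_simp
    ring
  · field_simp
    linear_combination 2 * hS_sq

lemma two_step_rate_eq {m M S α₀ α₁ : ℝ} (hm : 0 ≤ m) (hmM : m < M)
    (hS : S = √(M ^ 2 + (M - m) ^ 2))
    (hα₀ : α₀ = 2 / (m + S)) (hα₁ : α₁ = 2 / (2 * M + m - S)) :
    (S - M) / (2 * m + S - M) = (1 - α₀ * m) * (1 - α₁ * m) := by
  obtain ⟨hMS, hSM⟩ : M < S ∧ S < 2 * M - m := hS ▸ sqrt_sq_add_sub_sq_mem_Ioo hm hmM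
  have hS_sq : S ^ 2 = M ^ 2 + (M - m) ^ 2 := by rw [hS, Real.sq_sqrt (by positivity)]
  have hden₀ : 0 < m + S := by linarith
  have hden₁ : 0 < 2 * M + m - S := by linarith
  have hden : 0 < 2 * m + S - M := by linarith
  have ha : 1 - α₀ * m = (S - m) / (m + S) := by rw [hα₀]; field_simp; ring
  have hb : 1 - α₁ * m = (2 * M - m - S) / (2 * M + m - S) := by rw [hα₁]; field_simp; ring
  rw [ha, hb, div_mul_div_comm, div_eq_div_iff hden.ne' (mul_pos hden₀ hden₁).ne']
  linear_combination 2 * m * hS_sq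

namespace IsOptimalTwoStep

variable {m M α₀ α₁ : ℝ}

lemma add_eq (h : IsOptimalTwoStep m M α₀ α₁) (hmM : m < M) :
    α₀ + α₁ = (M + m) * (α₀ * α₁) := by
  refine mul_left_cancel₀ (sub_pos.2 hmM).ne' ?_
  linear_combination -h.quadratic_balance

lemma sub_eq (h : IsOptimalTwoStep m M α₀ α₁) (hmM : m < M) :
    α₁ - α₀ = (M - m) * (1 - α₁ * m) * α₀ ^ 2 := by
  linear_combination h.add_eq hmM + α₀ * h.huber_balance

lemma stepsize_le (h : IsOptimalTwoStep m M α₀ α₁) (hmM : m < M) : α₀ ≤ α₁ := by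
  have hb : 0 ≤ 1 - α₁ * m := sub_nonneg.2 h.mul_le_one
  have := sub_pos.2 hmM
  rw [← sub_nonneg, h.sub_eq hmM]
  positivity

lemma mul_sub_mul_sq_eq (h : IsOptimalTwoStep m M α₀ α₁) (hmM : m < M) :
    M * (M - m) * α₀ ^ 2 = 2 * (1 - α₀ * m) := by
  refine mul_left_cancel₀ h.pos.ne' ?_
  linear_combination (1 - (M + m) * α₀) * h.sub_eq hmM
    - (1 + (M - m) * m * α₀ ^ 2) * h.add_eq hmM

lemma one_sub_mul_nonneg (h : IsOptimalTwoStep m M α₀ α₁) (hm : 0 ≤ m) (hmM : m < M) :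
    0 ≤ 1 - α₀ * m := by
  have hM : 0 < M := hm.trans_lt hmM
  have := sub_pos.2 hmM
  have hsq : 0 ≤ M * (M - m) * α₀ ^ 2 := by positivity
  linarith [h.mul_sub_mul_sq_eq hmM]

lemma mul_rate_le (h : IsOptimalTwoStep m M α₀ α₁) (hm : 0 ≤ m) (hmM : m < M) :
    α₀ * ((1 - α₀ * m) * (1 - α₁ * m)) ≤ α₁ := by
  have hα₁ : 0 ≤ α₁ := h.pos.le.trans (h.stepsize_le hmM)
  have hrate : (1 - α₀ * m) * (1 - α₁ * m) ≤ 1 :=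
    mul_le_one₀ (sub_le_self 1 (mul_nonneg h.pos.le hm)) (sub_nonneg.2 h.mul_le_one)
      (sub_le_self 1 (mul_nonneg hα₁ hm))
  exact (mul_le_of_le_one_right h.pos.le hrate).trans (h.stepsize_le hmM)

variable {E : Type*} [NormedAddCommGroup E] [InnerProductSpace ℝ E]

lemma sq_mul_norm_sq_sub_norm_sq (h : IsOptimalTwoStep m M α₀ α₁) (hmM : m < M) {a b : ℝ}
    (ha : a = 1 - α₀ * m) (hb : b = 1 - α₁ * m) (φ : E → ℝ) {g : E → E} {xstar x₀ x₁ x₂ : E}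
    (hg : g xstar = 0) (hx₁ : x₁ - xstar = a • (x₀ - xstar) - α₀ • g x₀)
    (hx₂ : x₂ - xstar = b • (x₁ - xstar) - α₁ • g x₁) :
    (a * b) ^ 2 * ‖x₀ - xstar‖ ^ 2 - ‖x₂ - xstar‖ ^ 2 =
      (M - m) * b ^ 2 * α₀ ^ 3 * interpolationGap (M - m) φ g xstar x₀
        + α₁ * (α₁ - α₀ * (a * b)) * interpolationGap (M - m) φ g xstar x₁
        + (α₁ * (α₁ - α₀ * (a * b)) + (M - m) * b ^ 2 * α₀ ^ 3)
          * interpolationGap (M - m) φ g x₁ xstar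
        + α₀ * α₁ * (a * b) * interpolationGap (M - m) φ g x₀ x₁
        + b ^ 2 * α₀ ^ 2 * interpolationGap (M - m) φ g x₁ x₀ := by
  -- Each equation is named after the terms whose coefficients it matches.
  have hvalues : a * α₁ = b * α₀ * (1 + (M - m) * α₀) := by
    rw [ha, hb]
    linear_combination h.add_eq hmM + α₀ * h.huber_balance
  have hyg₀ : (M - m) * α₀ * (1 - a + (M - m) * α₀) = 2 * a := by
    rw [ha]
    linear_combination h.mul_sub_mul_sq_eq hmM
  have hyg₁ : (M - m) * (α₁ - α₀ * b) = 2 * b := by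
    rw [hb]
    linear_combination h.huber_balance
  have hg₀g₁ : a * α₁ + b * α₀ = (M - m) * (α₀ * α₁) := by
    rw [ha, hb]
    linear_combination h.add_eq hmM
  set y := x₀ - xstar with hy
  have hy₂ : x₂ - xstar = (a * b) • y - (b * α₀) • g x₀ - α₁ • g x₁ := by
    rw [hx₂, hx₁]; module
  have hy₀₁ : x₀ - x₁ = (1 - a) • y + α₀ • g x₀ := by
    rw [← sub_sub_sub_cancel_right x₀ x₁ xstar, hx₁, ← hy]; module
  simp only [interpolationGap, ← neg_sub x₀ xstar, ← neg_sub x₁ xstar, ← neg_sub x₀ x₁, ← hy, hy₂,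
    hy₀₁, hx₁, hg, ← real_inner_self_eq_norm_sq, inner_add_right, inner_sub_left, inner_sub_right,
    inner_neg_right, real_inner_smul_left, real_inner_smul_right, real_inner_comm y (g x₀),
    real_inner_comm y (g x₁), real_inner_comm (g x₀) (g x₁), inner_zero_left, inner_zero_right]
  linear_combination
    b * α₀ * ((⟪g x₀, g x₀⟫ - ⟪g x₁, g x₁⟫) / 2 - (M - m) * (φ x₀ - φ x₁)) * hvalues
      - b ^ 2 * α₀ * ⟪y, g x₀⟫ * hyg₀ - a * α₁ * ⟪y, g x₁⟫ * hyg₁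
      + ⟪g x₀, g x₁⟫ * (α₀ * α₁ * hyg₁ - b * α₀ * hg₀g₁)

lemma norm_sub_le [CompleteSpace E] (h : IsOptimalTwoStep m M α₀ α₁) (hm : 0 ≤ m) (hmM : m < M)
    {f : E → ℝ} (hconv : StrongConvexOn Set.univ m f) (hf : Differentiable ℝ f)
    (hlip : ∀ x y, ‖∇ f x - ∇ f y‖ ≤ M * ‖x - y‖) {xstar : E} (hcrit : ∇ f xstar = 0)
    {x₀ x₁ x₂ : E} (hx₁ : x₁ = x₀ - α₀ • ∇ f x₀) (hx₂ : x₂ = x₁ - α₁ • ∇ f x₁) :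
    ‖x₂ - xstar‖ ≤ (1 - α₀ * m) * (1 - α₁ * m) * ‖x₀ - xstar‖ := by
  have hgap := interpolationGap_sub_sq_nonneg hmM hconv hf hlip xstar
  have hcert := h.sq_mul_norm_sq_sub_norm_sq hmM rfl rfl (fun z => f z - m / 2 * ‖z - xstar‖ ^ 2)
    (g := fun z => ∇ f z - m • (z - xstar)) (xstar := xstar) (x₀ := x₀) (x₁ := x₁) (x₂ := x₂)
    (by simp [hcrit]) (by rw [hx₁]; module) (by rw [hx₂]; module)
  have := (sub_pos.2 hmM).le
  have ha := h.one_sub_mul_nonneg hm hmM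
  have hb : 0 ≤ 1 - α₁ * m := sub_nonneg.2 h.mul_le_one
  have hα₀ := h.pos.le
  have hα₁ : 0 ≤ α₁ := hα₀.trans (h.stepsize_le hmM)
  have hr := sub_nonneg.2 (h.mul_rate_le hm hmM)
  refine le_of_sq_le_sq ?_ (by positivity)
  rw [mul_pow, ← sub_nonneg, hcert]
  have := hgap xstar x₀
  have := hgap xstar x₁
  have := hgap x₁ xstar
  have := hgap x₀ x₁
  have := hgap x₁ x₀
  positivity

end IsOptimalTwoStep

theorem two_step_schedule_rate_general {E : Type*} [NormedAddCommGroup E] [InnerProductSpace ℝ E]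
    [CompleteSpace E] {m M S α₀ α₁ R₂ : ℝ} (hm : 0 ≤ m) (hmM : m < M)
    (hS : S = √(M ^ 2 + (M - m) ^ 2))
    (hα₀ : α₀ = 2 / (m + S)) (hα₁ : α₁ = 2 / (2 * M + m - S))
    (hR₂ : R₂ = (S - M) / (2 * m + S - M))
    {f : E → ℝ} (hconv : StrongConvexOn Set.univ m f) (hf : Differentiable ℝ f)
    (hlip : ∀ x y, ‖∇ f x - ∇ f y‖ ≤ M * ‖x - y‖) {xstar : E} (hmin : ∀ y, f xstar ≤ f y)
    {x₀ x₁ x₂ : E} (hx₁ : x₁ = x₀ - α₀ • ∇ f x₀) (hx₂ : x₂ = x₁ - α₁ • ∇ f x₁) :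
    ‖x₂ - xstar‖ ≤ R₂ * ‖x₀ - xstar‖ := by
  rw [hR₂, two_step_rate_eq hm hmM hS hα₀ hα₁]
  exact (isOptimalTwoStep_of_sqrt hm hmM hS hα₀ hα₁).norm_sub_le hm hmM hconv hf hlip
    (gradient_eq_zero_of_isLocalMin (Filter.Eventually.of_forall hmin)) hx₁ hx₂

/-- **Two-step optimal schedule guarantee** (from Theorem 8.10 of Altschuler 2018).
With `S = √(M² + (M−m)²)`, the stepsizes `α₀ = 2/(m+S)` and `α₁ = 2/(2M+m−S)` make two
steps of gradient descent on any `m`-strongly convex `M`-smooth function contract the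
distance to the minimizer by the factor `R₂ = (S−M)/(2m+S−M)`. -/
theorem two_step_schedule_rate (m M : ℝ) (hm : 0 < m) (hmM : m < M)
    (S α₀ α₁ R₂ : ℝ)
    (hS : S = Real.sqrt (M ^ 2 + (M - m) ^ 2))
    (hα₀ : α₀ = 2 / (m + S)) (hα₁ : α₁ = 2 / (2 * M + m - S))
    (hR₂ : R₂ = (S - M) / (2 * m + S - M)) :
    ∀ (d : ℕ) (f : EuclideanSpace ℝ (Fin d) → ℝ),
      ConvexOn ℝ Set.univ (fun x => f x - m / 2 * ‖x‖ ^ 2) →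
      Differentiable ℝ f →
      (∀ x y : EuclideanSpace ℝ (Fin d), ‖gradient f x - gradient f y‖ ≤ M * ‖x - y‖) →
      ∀ xstar : EuclideanSpace ℝ (Fin d), (∀ y, f xstar ≤ f y) →
      ∀ x₀ x₁ x₂ : EuclideanSpace ℝ (Fin d),
        x₁ = x₀ - α₀ • gradient f x₀ →
        x₂ = x₁ - α₁ • gradient f x₁ →
        ‖x₂ - xstar‖ ≤ R₂ * ‖x₀ - xstar‖ := by
  intro d f hconv hf hlip xstar hmin x₀ x₁ x₂ hx₁ hx₂
  exact two_step_schedule_rate_general hm.le hmM hS hα₀ hα₁ hR₂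
    (strongConvexOn_iff_convex.2 hconv) hf hlip hmin hx₁ hx₂
end

section
/- Let 0 < m < M, S = √(M² + (M−m)²), α_0 = 2/(m+S), α_1 = 2/(2M+m−S), and R_2 = (S−M)/(2m+S−M). For every pair of stepsizes (a, b) ∈ ℝ² with (a, b) ≠ (α_0, α_1), there exist a dimension d, a function f : ℝ^d → ℝ that is m-strongly convex and differentiable with M-Lipschitz gradient, with minimizer x*, and an initial point x_0 ≠ x*, such that the iterates x_1 = x_0 − a ∇f(x_0) and x_2 = x_1 − b ∇f(x_1) satisfy ‖x_2 − x*‖ > R_2 ‖x_0 − x*‖. In other words, (α_0, α_1) is the unique two-step schedule achieving the worst-case rate R_2. -/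
/-!
Let `r : ℝ → ℝ` be monotone and `1`-Lipschitz with `r 0 = 0`. For a unit vector `e`, the function
`m / 2 * ‖x‖ ^ 2 + (M - m) * ∫ s in 0..⟪e, x⟫, r s` is `m`-strongly convex and `M`-smooth with
minimizer `0`, and gradient descent started at `e` stays on the line `ℝ e`. A two-step rate `R` for
the stepsizes `(a, b)` therefore bounds the scalar dynamics of every such `r`, and four of them
suffice: `0` (curvature `m`), `t` (curvature `M`), `max t 0` (curvature `m`, then `M`) and
`min t p` (curvature `M`, then `m`), where the kink `p` sits exactly at the first iterate.

In each resulting inequality `b` enters through `1 - b * m` or `b * M - 1`, so a positive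
combination of two of them eliminates `b`. The first and fourth function give `α₀ ≤ a`, the second
and third give `a < α₁`, and the first two give `0 ≤ (a - α₀) * (a - α₁)`, whence `a = α₀`. The
first two then pin down `b`.
-/

open scoped RealInnerProductSpace

theorem convexOn_integral_of_monotone {r : ℝ → ℝ} (hr : Continuous r) (hmono : Monotone r) (a : ℝ) :
    ConvexOn ℝ Set.univ fun u => ∫ s in a..u, r s := by
  have hderiv (u : ℝ) : HasDerivAt (fun u => ∫ s in a..u, r s) (r u) u :=
    (hr.integral_hasStrictDerivAt a u).hasDerivAt
  refine Monotone.convexOn_univ_of_deriv (fun u => (hderiv u).differentiableAt) ?_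
  rwa [deriv_eq hderiv]

theorem integral_nonneg_of_monotone_of_eq_zero {r : ℝ → ℝ} (hmono : Monotone r) {a : ℝ}
    (ha : r a = 0) (u : ℝ) : 0 ≤ ∫ s in a..u, r s := by
  rcases le_total a u with hu | hu
  · exact intervalIntegral.integral_nonneg hu fun s hs => ha ▸ hmono hs.1
  · rw [intervalIntegral.integral_symm, ← intervalIntegral.integral_neg]
    exact intervalIntegral.integral_nonneg hu fun s hs => neg_nonneg.2 (ha ▸ hmono hs.2)

theorem mul_sub_le_of_mul_one_sub_le {m M b x P Q : ℝ} (hm : 0 ≤ m) (hM : 0 ≤ M)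
    (hP : x * (1 - b * m) ≤ P) (hQ : x * (b * M - 1) ≤ Q) : x * (M - m) ≤ M * P + m * Q :=
  calc x * (M - m) = M * (x * (1 - b * m)) + m * (x * (b * M - 1)) := by ring
    _ ≤ M * P + m * Q := by gcongr

section RidgePotential

variable {E : Type*} [NormedAddCommGroup E] [InnerProductSpace ℝ E]

/-- The quadratic `m / 2 * ‖x‖ ^ 2` plus a ridge function in the direction `e`, given by its slope
`c * r`; it turns worst cases on the line into worst cases on `E`. -/
noncomputable def ridgePotential (m c : ℝ) (r : ℝ → ℝ) (e x : E) : ℝ :=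
  m / 2 * ‖x‖ ^ 2 + c * ∫ s in 0..⟪e, x⟫, r s

theorem convexOn_ridgePotential_sub {m c : ℝ} (hc : 0 ≤ c) {r : ℝ → ℝ} (hr : Continuous r)
    (hmono : Monotone r) (e : E) :
    ConvexOn ℝ Set.univ fun x => ridgePotential m c r e x - m / 2 * ‖x‖ ^ 2 := by
  simpa [ridgePotential, Function.comp_def] using
    ((convexOn_integral_of_monotone hr hmono 0).comp_linearMap (innerSL ℝ e).toLinearMap).smul hc

theorem ridgePotential_zero_le {m c : ℝ} (hm : 0 ≤ m) (hc : 0 ≤ c) {r : ℝ → ℝ}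
    (hmono : Monotone r) (h0 : r 0 = 0) (e x : E) :
    ridgePotential m c r e 0 ≤ ridgePotential m c r e x :=
  calc ridgePotential m c r e 0 = 0 := by simp [ridgePotential]
    _ ≤ ridgePotential m c r e x := add_nonneg (by positivity)
      (mul_nonneg hc (integral_nonneg_of_monotone_of_eq_zero hmono h0 ⟪e, x⟫))

variable [CompleteSpace E]

theorem hasGradientAt_ridgePotential (m c : ℝ) {r : ℝ → ℝ} (hr : Continuous r) (e x : E) :
    HasGradientAt (ridgePotential m c r e) (m • x + (c * r ⟪e, x⟫) • e) x := by
  rw [hasGradientAt_iff_hasFDerivAt]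
  have hquad := (hasStrictFDerivAt_norm_sq x).hasFDerivAt.const_mul (m / 2)
  have hridge := ((hr.integral_hasStrictDerivAt 0 ⟪e, x⟫).hasDerivAt.comp_hasFDerivAt x
    (innerSL ℝ e).hasFDerivAt).const_mul c
  refine (hquad.add hridge).congr_fderiv ?_
  ext y
  simp only [add_apply, smul_apply, coe_innerSL_apply, nsmul_eq_mul, Nat.cast_ofNat, smul_eq_mul,
    map_add, map_smul, InnerProductSpace.toDual_apply_apply]
  ring

theorem norm_gradient_ridgePotential_sub_le {m c : ℝ} (hm : 0 ≤ m) (hc : 0 ≤ c) {r : ℝ → ℝ}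
    (hr : LipschitzWith 1 r) {e : E} (he : ‖e‖ = 1) (x y : E) :
    ‖gradient (ridgePotential m c r e) x - gradient (ridgePotential m c r e) y‖ ≤
      (m + c) * ‖x - y‖ := by
  have hslope : |r ⟪e, x⟫ - r ⟪e, y⟫| ≤ ‖x - y‖ := calc
    |r ⟪e, x⟫ - r ⟪e, y⟫| ≤ |⟪e, x⟫ - ⟪e, y⟫| := by
      simpa [Real.dist_eq] using hr.dist_le_mul ⟪e, x⟫ ⟪e, y⟫
    _ = |⟪e, x - y⟫| := by rw [inner_sub_right]
    _ ≤ ‖x - y‖ := by simpa [he] using abs_real_inner_le_norm e (x - y)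
  rw [(hasGradientAt_ridgePotential m c hr.continuous e x).gradient,
    (hasGradientAt_ridgePotential m c hr.continuous e y).gradient]
  calc ‖m • x + (c * r ⟪e, x⟫) • e - (m • y + (c * r ⟪e, y⟫) • e)‖
      = ‖m • (x - y) + (c * (r ⟪e, x⟫ - r ⟪e, y⟫)) • e‖ := by congr 1; module
    _ ≤ m * ‖x - y‖ + c * |r ⟪e, x⟫ - r ⟪e, y⟫| := by
      refine (norm_add_le _ _).trans_eq ?_
      simp [norm_smul, he, abs_of_nonneg hm, abs_of_nonneg hc]
    _ ≤ (m + c) * ‖x - y‖ := by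
      rw [add_mul]
      gcongr

end RidgePotential

/-- A normalized slope of a convex function on the line minimized at `0`. For `m < M`, the function
`m * t + (M - m) * r t` is then the general derivative with difference quotients in `[m, M]` that
vanishes at `0`, so the normalization does not depend on `m` and `M`. -/
structure IsSlopeProfile (r : ℝ → ℝ) : Prop where
  monotone : Monotone r
  lipschitz : LipschitzWith 1 r
  map_zero : r 0 = 0

theorem isSlopeProfile_zero : IsSlopeProfile fun _ => 0 :=
  ⟨monotone_const, LipschitzWith.const' 0, rfl⟩

theorem isSlopeProfile_id : IsSlopeProfile fun t => t :=
  ⟨monotone_id, LipschitzWith.id, rfl⟩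

theorem isSlopeProfile_max_zero : IsSlopeProfile fun t => max t 0 :=
  ⟨monotone_id.max monotone_const, LipschitzWith.id.max_const 0, max_self 0⟩

theorem isSlopeProfile_min {p : ℝ} (hp : 0 ≤ p) : IsSlopeProfile fun t => min t p :=
  ⟨monotone_id.min monotone_const, LipschitzWith.id.min_const p, min_eq_left hp⟩

/-- One gradient step of size `a`, started at `t`, for the function on the line with derivative
`m * t + (M - m) * r t`. -/
def profileStep (m M : ℝ) (r : ℝ → ℝ) (a t : ℝ) : ℝ :=
  t - a * (m * t + (M - m) * r t)

theorem smul_sub_smul_gradient_ridgePotential {E : Type*} [NormedAddCommGroup E]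
    [InnerProductSpace ℝ E] [CompleteSpace E] (m M : ℝ) {r : ℝ → ℝ} (hr : Continuous r) {e : E}
    (he : ‖e‖ = 1) (a t : ℝ) :
    t • e - a • gradient (ridgePotential m (M - m) r e) (t • e) = profileStep m M r a t • e := by
  have hinner : ⟪e, t • e⟫ = t := by simp [real_inner_smul_right, he]
  rw [(hasGradientAt_ridgePotential m (M - m) hr e (t • e)).gradient, hinner, profileStep]
  module

/-- `R` bounds the contraction of two steps of sizes `a` and `b` for all slope profiles. Starting at
`1` suffices because rescaling a profile gives a profile. -/
def IsProfileRate (m M a b R : ℝ) : Prop :=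
  ∀ r, IsSlopeProfile r → |profileStep m M r b (profileStep m M r a 1)| ≤ R

namespace IsProfileRate

variable {m M a b R : ℝ}

theorem low_low (h : IsProfileRate m M a b R) : |(1 - a * m) * (1 - b * m)| ≤ R := by
  convert h _ isSlopeProfile_zero using 2
  simp only [profileStep]
  ring

theorem high_high (h : IsProfileRate m M a b R) : |(a * M - 1) * (b * M - 1)| ≤ R := by
  convert h _ isSlopeProfile_id using 2
  simp only [profileStep]
  ring

theorem high_low (h : IsProfileRate m M a b R) (ha : 1 ≤ a * M) :
    |(a * M - 1) * (1 - b * m)| ≤ R := by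
  have hfst : profileStep m M (fun t => max t 0) a 1 = 1 - a * M := by
    rw [profileStep, max_eq_left zero_le_one]
    ring
  have hbound := h _ isSlopeProfile_max_zero
  rw [hfst, profileStep, max_eq_right (by linarith), ← abs_neg] at hbound
  convert hbound using 2
  ring

theorem low_high (h : IsProfileRate m M a b R) (hM : 0 ≤ M) (hmM : m ≤ M) (ha : 0 ≤ a)
    (ham : a * m ≤ 1) :
    |(1 - a * m) * (b * M - 1)| ≤ R * (1 + a * (M - m)) := by
  have hden : 0 < 1 + a * (M - m) := by linarith [mul_nonneg ha (sub_nonneg.2 hmM)]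
  -- The solution of `p = 1 - a * (m + (M - m) * p)`: the first iterate is the kink itself.
  set p := (1 - a * m) / (1 + a * (M - m)) with hp
  have hpden : p * (1 + a * (M - m)) = 1 - a * m := div_mul_cancel₀ _ hden.ne'
  have hp₀ : 0 ≤ p := div_nonneg (by linarith) hden.le
  have hp₁ : p ≤ 1 := by rw [hp, div_le_one hden]; linarith [mul_nonneg ha hM]
  have hfst : profileStep m M (fun t => min t p) a 1 = p := by
    rw [profileStep, min_eq_right hp₁]
    linear_combination -hpden
  have hbound := h _ (isSlopeProfile_min hp₀)
  rw [hfst, profileStep, min_self] at hbound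
  have hsnd : (1 - a * m) * (b * M - 1) = -(p - b * (m * p + (M - m) * p)) * (1 + a * (M - m)) := by
    rw [← hpden]
    ring
  rw [hsnd, abs_mul, abs_neg, abs_of_pos hden]
  gcongr

end IsProfileRate

/-- Stepsizes `α`, `β` for which the profiles of `IsProfileRate.low_low`, `IsProfileRate.high_high`
and `IsProfileRate.low_high` all attain the same rate `R`; the inequalities fix the signs of the
factors. -/
structure IsEquioscillating (m M α β R : ℝ) : Prop where
  one_lt_fst_mul : 1 < α * M
  fst_mul_lt_two : α * (M + m) < 2
  one_lt_snd_mul : 1 < β * M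
  low_low : (1 - α * m) * (1 - β * m) = R
  high_high : (α * M - 1) * (β * M - 1) = R
  low_high : (1 - α * m) * (β * M - 1) = R * (1 + α * (M - m))

theorem isEquioscillating_sqrt {m M S : ℝ} (hm : 0 < m) (hmM : m < M)
    (hS : S = √(M ^ 2 + (M - m) ^ 2)) :
    IsEquioscillating m M (2 / (m + S)) (2 / (2 * M + m - S)) ((S - M) / (2 * m + S - M)) := by
  have hS₀ : 0 ≤ S := hS ▸ Real.sqrt_nonneg _
  have hsq : S ^ 2 = M ^ 2 + (M - m) ^ 2 := by rw [hS, Real.sq_sqrt (by positivity)]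
  have hMS : M < S := lt_of_pow_lt_pow_left₀ 2 hS₀ (by nlinarith)
  have hSM : S < 2 * M - m := lt_of_pow_lt_pow_left₀ 2 (by linarith) (by nlinarith)
  have hα : 0 < m + S := by linarith
  have hβ : 0 < 2 * M + m - S := by linarith
  have hR : 0 < 2 * m + S - M := by linarith
  constructor
  · rw [div_mul_eq_mul_div, lt_div_iff₀ hα]
    linarith
  · rw [div_mul_eq_mul_div, div_lt_iff₀ hα]
    linarith
  · rw [div_mul_eq_mul_div, lt_div_iff₀ hβ]
    linarith
  · field_simp
    linear_combination (-2 * m) * hsq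
  · field_simp
    linear_combination (-2 * m) * hsq
  · field_simp
    linear_combination (2 * S - 2 * M - 2 * m) * hsq

namespace IsEquioscillating

variable {m M α β R : ℝ}

theorem rate_pos (h : IsEquioscillating m M α β R) : 0 < R :=
  h.high_high ▸ mul_pos (sub_pos.2 h.one_lt_fst_mul) (sub_pos.2 h.one_lt_snd_mul)

theorem fst_pos (h : IsEquioscillating m M α β R) (hM : 0 < M) : 0 < α :=
  pos_of_mul_pos_left (one_pos.trans h.one_lt_fst_mul) hM.le

theorem fst_mul_lt_one (h : IsEquioscillating m M α β R) (hM : 0 < M) (hmM : m ≤ M) :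
    α * m < 1 := by
  nlinarith [h.fst_mul_lt_two, mul_le_mul_of_nonneg_left hmM (h.fst_pos hM).le]

theorem snd_mul_lt_one (h : IsEquioscillating m M α β R) (hM : 0 < M) (hmM : m ≤ M) :
    β * m < 1 :=
  sub_pos.1 <| (pos_iff_pos_of_mul_pos (h.low_low ▸ h.rate_pos)).1
    (sub_pos.2 (h.fst_mul_lt_one hM hmM))

theorem low_mul_sub (h : IsEquioscillating m M α β R) :
    (1 - α * m) * (M - m) = R * (M + m + α * m * (M - m)) := by
  linear_combination M * h.low_low + m * h.low_high

theorem rate_mul_add_lt (h : IsEquioscillating m M α β R) (hm : 0 < m) (hmM : m < M) :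
    R * (M + m) < M - m := by
  have hpos : 0 < (1 + R) * (α * m * (M - m)) := by
    have := h.rate_pos
    have := h.fst_pos (hm.trans hmM)
    have := sub_pos.2 hmM
    positivity
  linarith [h.low_mul_sub]

theorem fst_add_snd (h : IsEquioscillating m M α β R) (hmM : m < M) :
    α + β = α * β * (M + m) := by
  refine mul_left_cancel₀ (sub_pos.2 hmM).ne' ?_
  linear_combination h.low_low - h.high_high

theorem fst_mul_snd (h : IsEquioscillating m M α β R) (hmM : m < M) :
    α * β * (m * M) = 1 - R := by
  linear_combination -h.low_low - m * h.fst_add_snd hmM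

theorem sub_mul_sub (h : IsEquioscillating m M α β R) (hmM : m < M) (a : ℝ) :
    (a - α) * (a - β) * (m * M) = R * (a * (M + m) - 1) - (1 - a * m) * (a * M - 1) := by
  linear_combination (-a * m * M) * h.fst_add_snd hmM + (1 - a * (M + m)) * h.fst_mul_snd hmM

end IsEquioscillating

namespace IsProfileRate

variable {m M a b α β R : ℝ}

theorem fst_pos (h : IsProfileRate m M a b R) (hm : 0 ≤ m) (hM : 0 ≤ M)
    (hR : R * (M + m) < M - m) : 0 < a := by
  by_contra! ha
  have le_of_abs_mul_le {c u : ℝ} (hc : 1 ≤ |c|) (hcu : |c * u| ≤ R) : u ≤ R := by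
    rw [abs_mul] at hcu
    exact (le_abs_self u).trans ((le_mul_of_one_le_left (abs_nonneg u) hc).trans hcu)
  have hlow : 1 - b * m ≤ R :=
    le_of_abs_mul_le (le_abs.2 (.inl (by nlinarith))) h.low_low
  have hhigh : b * M - 1 ≤ R :=
    le_of_abs_mul_le (le_abs.2 (.inr (by nlinarith))) h.high_high
  have := mul_sub_le_of_mul_one_sub_le (x := 1) hm hM (by simpa using hlow) (by simpa using hhigh)
  linarith

theorem fst_lt_snd (h : IsProfileRate m M a b R) (hopt : IsEquioscillating m M α β R)
    (hm : 0 < m) (hmM : m < M) : a < β := by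
  have hM := hm.trans hmM
  by_contra! hβa
  have haM : 1 < a * M := hopt.one_lt_snd_mul.trans_le (by gcongr)
  have hβ : (β * M - 1) * (M - m) ≤ (β * M - 1) * ((α * M - 1) * (M + m)) := calc
    (β * M - 1) * (M - m) ≤ (a * M - 1) * (M - m) := by
      gcongr
    _ ≤ M * R + m * R := mul_sub_le_of_mul_one_sub_le hm.le hM.le
      (le_of_abs_le (h.high_low haM.le)) (le_of_abs_le h.high_high)
    _ = (β * M - 1) * ((α * M - 1) * (M + m)) := by rw [← hopt.high_high]; ring
  have hα : M - m ≤ (α * M - 1) * (M + m) :=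
    le_of_mul_le_mul_left hβ (sub_pos.2 hopt.one_lt_snd_mul)
  linarith [mul_lt_mul_of_pos_left hopt.fst_mul_lt_two hM]

theorem le_fst (h : IsProfileRate m M a b R) (hopt : IsEquioscillating m M α β R)
    (hm : 0 < m) (hmM : m < M) (ha : 0 ≤ a) (ham : a * m ≤ 1) : α ≤ a := by
  have hM := hm.trans hmM
  have helim : (1 - a * m) * (M - m) ≤ M * R + m * (R * (1 + a * (M - m))) :=
    mul_sub_le_of_mul_one_sub_le hm.le hM.le (le_of_abs_le h.low_low)
      (le_of_abs_le (h.low_high hM.le hmM.le ha ham))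
  have hprod : 0 ≤ (a - α) * (m * (M - m) * (1 + R)) := by linarith [hopt.low_mul_sub]
  have := hopt.rate_pos
  have := sub_pos.2 hmM
  exact sub_nonneg.1 (nonneg_of_mul_nonneg_left hprod (by positivity))

theorem sub_mul_sub_nonneg (h : IsProfileRate m M a b R) (hopt : IsEquioscillating m M α β R)
    (hm : 0 < m) (hmM : m < M) (ham : a * m ≤ 1) (haM : 1 ≤ a * M) :
    0 ≤ (a - α) * (a - β) := by
  have hM := hm.trans hmM
  have helim : (1 - a * m) * (a * M - 1) * (M - m) ≤
      M * ((a * M - 1) * R) + m * ((1 - a * m) * R) := by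
    refine mul_sub_le_of_mul_one_sub_le hm.le hM.le (b := b) ?_ ?_
    · rw [mul_comm (1 - a * m), mul_assoc]
      exact mul_le_mul_of_nonneg_left (le_of_abs_le h.low_low) (sub_nonneg.2 haM)
    · rw [mul_assoc]
      exact mul_le_mul_of_nonneg_left (le_of_abs_le h.high_high) (sub_nonneg.2 ham)
  have hquad : (1 - a * m) * (a * M - 1) ≤ R * (a * (M + m) - 1) :=
    le_of_mul_le_mul_right (helim.trans_eq (by ring)) (sub_pos.2 hmM)
  refine nonneg_of_mul_nonneg_left (b := m * M) ?_ (by positivity)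
  rw [hopt.sub_mul_sub hmM]
  exact sub_nonneg.2 hquad

theorem fst_eq (h : IsProfileRate m M a b R) (hopt : IsEquioscillating m M α β R)
    (hm : 0 < m) (hmM : m < M) : a = α := by
  have hM := hm.trans hmM
  have ha : 0 < a := h.fst_pos hm.le hM.le (hopt.rate_mul_add_lt hm hmM)
  have haβ : a < β := h.fst_lt_snd hopt hm hmM
  have ham : a * m ≤ 1 := (mul_le_mul_of_nonneg_right haβ.le hm.le).trans
    (hopt.snd_mul_lt_one hM hmM.le).le
  have hαa : α ≤ a := h.le_fst hopt hm hmM ha.le ham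
  have haM : 1 ≤ a * M := hopt.one_lt_fst_mul.le.trans (by gcongr)
  have hprod := h.sub_mul_sub_nonneg hopt hm hmM ham haM
  exact le_antisymm (sub_nonpos.1 (nonpos_of_mul_nonneg_left hprod (sub_neg.2 haβ))) hαa

theorem snd_eq (h : IsProfileRate m M α b R) (hopt : IsEquioscillating m M α β R)
    (hm : 0 < m) (hmM : m < M) : b = β := by
  have hM := hm.trans hmM
  have hlow : 1 - b * m ≤ 1 - β * m := le_of_mul_le_mul_left
    ((le_of_abs_le h.low_low).trans_eq hopt.low_low.symm)
    (sub_pos.2 (hopt.fst_mul_lt_one hM hmM.le))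
  have hhigh : b * M - 1 ≤ β * M - 1 := le_of_mul_le_mul_left
    ((le_of_abs_le h.high_high).trans_eq hopt.high_high.symm) (sub_pos.2 hopt.one_lt_fst_mul)
  exact le_antisymm (le_of_mul_le_mul_right (by linarith) hM)
    (le_of_mul_le_mul_right (by linarith) hm)

end IsProfileRate

theorem two_step_schedule_unique_general {E : Type*} [NormedAddCommGroup E]
    [InnerProductSpace ℝ E] [CompleteSpace E] [Nontrivial E] {m M S α₀ α₁ R₂ : ℝ} (hm : 0 < m)
    (hmM : m < M) (hS : S = √(M ^ 2 + (M - m) ^ 2)) (hα₀ : α₀ = 2 / (m + S))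
    (hα₁ : α₁ = 2 / (2 * M + m - S)) (hR₂ : R₂ = (S - M) / (2 * m + S - M)) {a b : ℝ}
    (hab : (a, b) ≠ (α₀, α₁)) :
    ∃ f : E → ℝ,
      ConvexOn ℝ Set.univ (fun x => f x - m / 2 * ‖x‖ ^ 2) ∧
      Differentiable ℝ f ∧
      (∀ x y, ‖gradient f x - gradient f y‖ ≤ M * ‖x - y‖) ∧
      ∃ xstar, (∀ y, f xstar ≤ f y) ∧
      ∃ x₀, x₀ ≠ xstar ∧
        ∀ x₁ x₂, x₁ = x₀ - a • gradient f x₀ → x₂ = x₁ - b • gradient f x₁ →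
          ‖x₂ - xstar‖ > R₂ * ‖x₀ - xstar‖ := by
  obtain ⟨r, hr, hlt⟩ :
      ∃ r, IsSlopeProfile r ∧ R₂ < |profileStep m M r b (profileStep m M r a 1)| := by
    by_contra! hrate : IsProfileRate m M a b R₂
    have hopt : IsEquioscillating m M α₀ α₁ R₂ := by
      rw [hα₀, hα₁, hR₂]
      exact isEquioscillating_sqrt hm hmM hS
    obtain rfl := hrate.fst_eq hopt hm hmM
    exact hab (Prod.ext rfl (hrate.snd_eq hopt hm hmM))
  obtain ⟨e, he⟩ := exists_norm_eq E zero_le_one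
  have hc : 0 ≤ M - m := (sub_pos.2 hmM).le
  have hcont := hr.lipschitz.continuous
  refine ⟨ridgePotential m (M - m) r e, convexOn_ridgePotential_sub hc hcont hr.monotone e,
    fun x => (hasGradientAt_ridgePotential m (M - m) hcont e x).differentiableAt,
    fun x y => ?_, 0, ridgePotential_zero_le hm.le hc hr.monotone hr.map_zero e,
    e, norm_ne_zero_iff.1 (by simp [he]), ?_⟩
  · simpa using norm_gradient_ridgePotential_sub_le hm.le hc hr.lipschitz he x y
  · rintro x₁ x₂ rfl rfl
    have hfst := smul_sub_smul_gradient_ridgePotential m M hcont he a 1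
    rw [one_smul] at hfst
    rw [hfst, smul_sub_smul_gradient_ridgePotential m M hcont he]
    simpa [norm_smul, he] using hlt

/-- **Uniqueness of the optimal two-step schedule** (Theorem 8.10 of Altschuler 2018):
any pair of stepsizes `(a, b)` other than `(α₀, α₁) = (2/(m+S), 2/(2M+m−S))` fails to
achieve the worst-case two-step contraction rate `R₂ = (S−M)/(2m+S−M)` on the class of
`m`-strongly convex, `M`-smooth functions, where `S = √(M² + (M−m)²)`. -/
theorem two_step_schedule_unique (m M : ℝ) (hm : 0 < m) (hmM : m < M)
    (S α₀ α₁ R₂ : ℝ)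
    (hS : S = Real.sqrt (M ^ 2 + (M - m) ^ 2))
    (hα₀ : α₀ = 2 / (m + S)) (hα₁ : α₁ = 2 / (2 * M + m - S))
    (hR₂ : R₂ = (S - M) / (2 * m + S - M)) :
    ∀ a b : ℝ, (a, b) ≠ (α₀, α₁) →
      ∃ (d : ℕ) (f : EuclideanSpace ℝ (Fin d) → ℝ),
        ConvexOn ℝ Set.univ (fun x => f x - m / 2 * ‖x‖ ^ 2) ∧
        Differentiable ℝ f ∧
        (∀ x y : EuclideanSpace ℝ (Fin d), ‖gradient f x - gradient f y‖ ≤ M * ‖x - y‖) ∧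
        ∃ xstar : EuclideanSpace ℝ (Fin d), (∀ y, f xstar ≤ f y) ∧
        ∃ x₀ : EuclideanSpace ℝ (Fin d), x₀ ≠ xstar ∧
          ∀ x₁ x₂ : EuclideanSpace ℝ (Fin d),
            x₁ = x₀ - a • gradient f x₀ →
            x₂ = x₁ - b • gradient f x₁ →
            ‖x₂ - xstar‖ > R₂ * ‖x₀ - xstar‖ := by
  intro a b hab
  exact ⟨1, two_step_schedule_unique_general hm hmM hS hα₀ hα₁ hR₂ hab⟩
end
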